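/- For every $\epsilon > 0$ there is a constant $c_\epsilon > 0$ such that the following holds: for every prime $p > 3$, every integer $a$ with $\gcd(a, p) = 1$, every integer $c$, and every integer $H$ with $c_\epsilon \, p^{1/6 + \epsilon} \le H \le p$, there exist integers $0 \le X, Y \le p - 1$ such that the box $B(X, Y; H)$ contains at least two points of $C_{a,c}$, i.e. $|C_{a,c} \cap B(X, Y; H)| \ge 2$. -/

import Mathlib

/-!
Write `F g = a g³ + c g` and let `χ` be the quadratic character modulo `p`. The points of the curve
with abscissas `x - g` and `x + g` differ by `(2 g, 2 l)` exactly when `3 a g x² = l - F g`. So if no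
box of side `H` contains two points, then `3 a g (l - F g)` is a nonsquare whenever `1 ≤ g` and
`2 g, 2 l < H` (`quadraticChar_eq_neg_one`).

For `M < m ≤ 2 M`, `1 ≤ g ≤ 3 M T` and `0 ≤ l < M T` put `z = (l - F g) / m`. For `1 ≤ t ≤ T` one has
`z + t = (l + m t - F g) / m` with `l + m t < 3 M T`, so `χ` takes a single value on
`z + 1, …, z + T`. Here `M` is about `p ^ (1/6 + ε/2)` and `T` is a small power of `p`, so that
`6 M T < H`. Two estimates for the number of these `z` contradict each other.

* The number is `O(√p)`. By Stepanov's method the sums of `χ` over products of distinct linear factors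
  are `O(√p)`, and the second moment of an elementary symmetric function of `χ (z + 1), …, χ (z + T)`
  then shows that few `z` start a run of length `T` (`card_run_le`).
* The number is at least `M³ T²` up to a factor `p ^ ε` of divisor-bound type (`card_quotSet_ge`). Two
  representations `(m, g, l)`, `(m', g', l')` of the same `z` make `m' F g - m F g'` small modulo `p`. A
  window-counting Cauchy–Schwarz step reduces the count to the case `m = m'`, and there comparing two
  solutions with the same `m` and `g - g'` eliminates `c` and leaves a product of integers, of bounded
  size, that the divisor bound handles (`sum_nearCount_le`).
-/

/-- The modular reduced cubic `C_{a,c}`: points `(x, y)` with `0 ≤ x, y ≤ p - 1`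
and `y ≡ a x³ + c x (mod p)`. -/
def cubicPoints (p : ℕ) (a c : ℤ) : Set (ℤ × ℤ) :=
  {q | 0 ≤ q.1 ∧ q.1 ≤ (p : ℤ) - 1 ∧ 0 ≤ q.2 ∧ q.2 ≤ (p : ℤ) - 1 ∧
    Int.ModEq (p : ℤ) q.2 (a * q.1 ^ 3 + c * q.1)}

/-- The box `B(X, Y; H)`: points `(x, y)` with `x ≡ X + i (mod p)` for some `1 ≤ i ≤ H`
and `y ≡ Y + j (mod p)` for some `1 ≤ j ≤ H`. -/
def box (p : ℕ) (X Y : ℤ) (H : ℕ) : Set (ℤ × ℤ) :=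
  {q | (∃ i : ℤ, 1 ≤ i ∧ i ≤ (H : ℤ) ∧ Int.ModEq (p : ℤ) q.1 (X + i)) ∧
       (∃ j : ℤ, 1 ≤ j ∧ j ≤ (H : ℤ) ∧ Int.ModEq (p : ℤ) q.2 (Y + j))}

/-! ### Stepanov's method -/

section
open Polynomial
variable {F : Type*} [Field F]

/-- The operator on polynomials obtained by differentiating `k` times a product `f ^ e * r` and
stripping the factor `f ^ (e - k)`; see `iterate_derivative_stepOp`. Meant for `k ≤ e`, where the
subtraction in the coefficient is not truncated. -/
noncomputable def stepOp (f : F[X]) (e : ℕ) : ℕ → F[X] →ₗ[F] F[X]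
  | 0 => LinearMap.id
  | k + 1 => (LinearMap.mulLeft F (((e - k : ℕ) : F[X]) * derivative f)
      + LinearMap.mulLeft F f ∘ₗ derivative) ∘ₗ stepOp f e k

lemma stepOp_succ (f : F[X]) (e k : ℕ) (r : F[X]) :
    stepOp f e (k + 1) r = ((e - k : ℕ) : F[X]) * derivative f * stepOp f e k r
      + f * derivative (stepOp f e k r) := rfl

/-- A factor `G` with zero derivative, such as `X ^ (p * j)` in characteristic `p`, is carried
along as a constant. -/
lemma iterate_derivative_stepOp (f G : F[X]) (hG : derivative G = 0) (e k : ℕ) (hk : k ≤ e)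
    (r : F[X]) :
    derivative^[k] (f ^ e * r * G) = f ^ (e - k) * stepOp f e k r * G := by
  induction k with
  | zero => simp [stepOp]
  | succ k ih =>
    rw [Function.iterate_succ_apply', ih (by omega), stepOp_succ]
    obtain ⟨d, hd⟩ : ∃ d, e - k = d + 1 := ⟨e - k - 1, by omega⟩
    have hd' : e - (k + 1) = d := by omega
    rw [hd, hd']
    simp only [derivative_mul, derivative_pow, hG, Nat.add_sub_cancel, C_eq_natCast]
    ring

lemma natDegree_stepOp (f : F[X]) (e k B : ℕ) (r : F[X]) (hr : r.natDegree ≤ B) :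
    (stepOp f e k r).natDegree ≤ B + k * f.natDegree := by
  induction k with
  | zero => simpa [stepOp] using hr
  | succ k ih =>
    rw [stepOp_succ]
    refine (natDegree_add_le _ _).trans (max_le ?_ ?_)
    · refine natDegree_mul_le.trans ?_
      have h1 : (((e - k : ℕ) : F[X]) * derivative f).natDegree ≤ f.natDegree := by
        refine natDegree_mul_le.trans ?_
        have := natDegree_derivative_le f
        simp only [natDegree_natCast]; omega
      nlinarith
    · refine natDegree_mul_le.trans ?_
      have := natDegree_derivative_le (stepOp f e k r)
      have : (derivative (stepOp f e k r)).natDegree ≤ (stepOp f e k r).natDegree := by omega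
      nlinarith

/-- Linear algebra in Stepanov's method: the `2 J B` coefficients of the `r j` and `s j` are
subject to `K (B + J + K m)` homogeneous linear conditions, so a nontrivial choice exists. For
`e₁ = K` and `e₂ = K + q` the conditions say that the first `K` derivatives of the auxiliary
polynomial vanish wherever `f ^ q` takes the value `σ`. -/
lemma stepanov_kernel (f : F[X]) (σ : F) (e₁ e₂ K B J m : ℕ) (hf : f.natDegree ≤ m) (hB : 0 < B)
    (hdim : K * (B + J + K * m) < 2 * J * B) :
    ∃ r s : ℕ → F[X], (∀ j, (r j).natDegree < B) ∧ (∀ j, (s j).natDegree < B) ∧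
      (∃ j < J, r j ≠ 0 ∨ s j ≠ 0) ∧
      ∀ k < K, ∑ j ∈ Finset.range J,
        (stepOp f e₁ k (r j) + C σ * stepOp f e₂ k (s j)) * X ^ j = 0 := by
  classical
  let V := Fin J → (degreeLT F B × degreeLT F B)
  let N := B + J + K * m
  let T : ℕ → V →ₗ[F] F[X] := fun k =>
    ∑ j : Fin J, LinearMap.mulRight F (X ^ (j : ℕ)) ∘ₗ
      (stepOp f e₁ k ∘ₗ (degreeLT F B).subtype ∘ₗ LinearMap.fst F _ _ ∘ₗ LinearMap.proj j
       + LinearMap.mulLeft F (C σ) ∘ₗ stepOp f e₂ k ∘ₗ (degreeLT F B).subtype ∘ₗ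
          LinearMap.snd F _ _ ∘ₗ LinearMap.proj j)
  let Φ : V →ₗ[F] (Fin K → Fin N → F) :=
    LinearMap.pi fun k => LinearMap.pi fun n => (lcoeff F (n : ℕ)) ∘ₗ T k
  have : FiniteDimensional F (degreeLT F B) :=
    LinearEquiv.finiteDimensional (degreeLTEquiv F B).symm
  have hfr : Module.finrank F (degreeLT F B) = B := by
    rw [(degreeLTEquiv F B).finrank_eq]; simp
  have hker : LinearMap.ker Φ ≠ ⊥ := by
    apply LinearMap.ker_ne_bot_of_finrank_lt
    simp only [V, N, Module.finrank_pi_fintype, Module.finrank_prod, hfr, Module.finrank_self,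
      Finset.sum_const, Finset.card_univ, Fintype.card_fin, smul_eq_mul, mul_one]
    nlinarith
  obtain ⟨v, hv, hv0⟩ := (Submodule.ne_bot_iff _).1 hker
  have hdeg : ∀ q : degreeLT F B, (q : F[X]).natDegree < B := fun q => by
    have h1 := mem_degreeLT.1 q.2
    rcases eq_or_ne (q : F[X]) 0 with h | h
    · rw [h]; simpa using hB
    · exact (natDegree_lt_iff_degree_lt h).2 h1
  have hTv : ∀ k, T k v = ∑ j : Fin J, (stepOp f e₁ k ((v j).1 : F[X])
      + C σ * stepOp f e₂ k ((v j).2 : F[X])) * X ^ (j : ℕ) := fun k => by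
    simp only [T, LinearMap.sum_apply]
    rfl
  refine ⟨fun j => if h : j < J then ((v ⟨j, h⟩).1 : F[X]) else 0,
    fun j => if h : j < J then ((v ⟨j, h⟩).2 : F[X]) else 0, ?_, ?_, ?_, ?_⟩
  · intro j
    by_cases h : j < J <;> simp [h, hdeg, hB]
  · intro j
    by_cases h : j < J <;> simp [h, hdeg, hB]
  · by_contra hcon
    push Not at hcon
    apply hv0
    funext j
    refine Prod.ext ?_ ?_
    · have := (hcon j j.2).1
      simpa using! this
    · have := (hcon j j.2).2
      simpa using! this
  · intro k hk
    have hT : T k v = 0 := by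
      ext n
      rw [coeff_zero]
      by_cases hn : n < N
      · have := congrFun (congrFun (LinearMap.mem_ker.1 hv) ⟨k, hk⟩) ⟨n, hn⟩
        simpa [Φ] using this
      · apply coeff_eq_zero_of_natDegree_lt
        have hkm : k * f.natDegree ≤ K * m := Nat.mul_le_mul hk.le hf
        have hJ0 : 0 < J := by
          rcases Nat.eq_zero_or_pos J with h | h
          · subst h; simp at hdim
          · exact h
        have : (T k v).natDegree ≤ (B - 1) + K * m + (J - 1) := by
          rw [hTv]
          refine natDegree_sum_le_of_forall_le _ _ fun j _ => ?_
          refine natDegree_mul_le.trans ?_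
          rw [natDegree_X_pow]
          have h1 := natDegree_stepOp f e₁ k (B - 1) ((v j).1 : F[X])
            (by have := hdeg (v j).1; omega)
          have h2 := natDegree_stepOp f e₂ k (B - 1) ((v j).2 : F[X])
            (by have := hdeg (v j).2; omega)
          have h3 := natDegree_C_mul_le σ (stepOp f e₂ k ((v j).2 : F[X]))
          have h4 := natDegree_add_le (stepOp f e₁ k ((v j).1 : F[X]))
            (C σ * stepOp f e₂ k ((v j).2 : F[X]))
          have := j.2
          have h5 := max_le (h1.trans (Nat.add_le_add_left hkm _))
            ((h3.trans h2).trans (Nat.add_le_add_left hkm _))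
          have := h4.trans h5
          omega
        simp only [N] at hn
        omega
    rw [← hT, hTv, Finset.sum_range]
    simp

end

section
open Polynomial

/-- The auxiliary polynomial of Stepanov's method is not zero. Modulo `X ^ p`, where
`f ^ p` is congruent to the constant `f 0`, its lowest coefficient pair would otherwise satisfy
`r ^ 2 f = s ^ 2 f 0`, and a simple root of `f` makes the multiplicities of the two sides differ in
parity. -/
lemma stepanov_ne_zero {p : ℕ} [Fact p.Prime] (q : ℕ) (hq : p = 2 * q + 1) (f : (ZMod p)[X])
    (α : ZMod p) (hα : f.rootMultiplicity α = 1) (hf0 : f.eval 0 ≠ 0) (m B : ℕ)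
    (hm : f.natDegree ≤ m) (hB : 2 * (B - 1) + m < p) (J : ℕ) (r s : ℕ → (ZMod p)[X])
    (hr : ∀ j, (r j).natDegree < B) (hs : ∀ j, (s j).natDegree < B)
    (hne : ∃ j < J, r j ≠ 0 ∨ s j ≠ 0) :
    ∑ j ∈ Finset.range J, (r j + s j * f ^ q) * X ^ (p * j) ≠ 0 := by
  classical
  intro hsum
  have hf : f ≠ 0 := by rintro rfl; simp at hf0
  obtain ⟨hjJ, hj⟩ := Nat.find_spec hne
  set i := Nat.find hne with hi
  have hmin : ∀ j < i, r j = 0 ∧ s j = 0 := fun j hji => by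
    have := Nat.find_min hne hji
    push Not at this
    exact this (by omega)
  -- reduce modulo `X ^ (p * (i + 1))`
  have h1 : (X : (ZMod p)[X]) ^ (p * (i + 1)) ∣ (r i + s i * f ^ q) * X ^ (p * i) := by
    have hi' : i ∈ Finset.range J := Finset.mem_range.2 hjJ
    rw [← Finset.add_sum_erase _ _ hi'] at hsum
    rw [eq_neg_of_add_eq_zero_left hsum, dvd_neg]
    refine Finset.dvd_sum fun j hj' => ?_
    rcases lt_or_gt_of_ne (Finset.ne_of_mem_erase hj') with h | h
    · simp [hmin j h]
    · exact Dvd.dvd.mul_left (pow_dvd_pow _ (Nat.mul_le_mul_left p h)) _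
  have h2 : (X : (ZMod p)[X]) ^ p ∣ r i + s i * f ^ q := by
    rw [Nat.mul_succ, Nat.add_comm, pow_add] at h1
    exact (mul_dvd_mul_iff_right (pow_ne_zero _ X_ne_zero)).1 h1
  have h3 : (X : (ZMod p)[X]) ^ p ∣ f ^ p - C (f.eval 0) := by
    have hX : (X : (ZMod p)[X]) ∣ f - C (f.eval 0) := by
      rw [X_dvd_iff]; simp [coeff_zero_eq_eval_zero]
    have := pow_dvd_pow_of_dvd hX p
    rwa [sub_pow_char, ← C_pow, ZMod.pow_card] at this
  have h4 : (X : (ZMod p)[X]) ^ p ∣ r i ^ 2 * f - s i ^ 2 * C (f.eval 0) := by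
    have : r i ^ 2 * f - s i ^ 2 * C (f.eval 0) =
        (r i + s i * f ^ q) * ((r i - s i * f ^ q) * f) + s i ^ 2 * (f ^ p - C (f.eval 0)) := by
      have hfp : f ^ p = f ^ q * f ^ q * f := by
        have := congrArg (f ^ ·) hq
        rw [this]; ring
      rw [hfp]; ring
    rw [this]
    exact dvd_add (h2.mul_right _) (h3.mul_left _)
  have h5 : r i ^ 2 * f - s i ^ 2 * C (f.eval 0) = 0 := by
    refine eq_zero_of_dvd_of_natDegree_lt h4 ?_
    rw [natDegree_X_pow]
    refine lt_of_le_of_lt (natDegree_sub_le _ _) (lt_of_le_of_lt ?_ hB)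
    have hri := hr i
    have hsi := hs i
    refine max_le ?_ ?_
    · refine natDegree_mul_le.trans ?_
      have := natDegree_pow_le (p := r i) (n := 2)
      omega
    · refine (natDegree_mul_C_le _ _).trans ?_
      have := natDegree_pow_le (p := s i) (n := 2)
      omega
  have h6 : r i ^ 2 * f = s i ^ 2 * C (f.eval 0) := sub_eq_zero.1 h5
  have hC : (C (f.eval 0) : (ZMod p)[X]) ≠ 0 := by simpa using hf0
  by_cases hr0 : r i = 0
  · have hs0 : s i ≠ 0 := by tauto
    rw [hr0] at h6
    simp [hs0, hf0] at h6
  · have hs0 : s i ≠ 0 := by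
      rintro h
      rw [h] at h6
      simp [hr0, hf] at h6
    -- the multiplicity of `α` is odd on one side, even on the other
    have h7 := congrArg (rootMultiplicity α) h6
    rw [rootMultiplicity_mul (by positivity), rootMultiplicity_mul (by positivity), hα,
      rootMultiplicity_C, pow_two, pow_two, rootMultiplicity_mul (by positivity),
      rootMultiplicity_mul (by positivity)] at h7
    omega

/-- Stepanov's estimate: the auxiliary polynomial has a zero of order at least `K` at each point
where `f ^ ((p - 1) / 2)` equals `σ`, so the number of those points is at most its degree divided
by `K`. -/
lemma stepanov_count {p : ℕ} [Fact p.Prime] (q : ℕ) (hq : p = 2 * q + 1) (f : (ZMod p)[X])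
    (α : ZMod p) (hα : f.rootMultiplicity α = 1) (hf0 : f.eval 0 ≠ 0) (m B J K : ℕ)
    (hm : f.natDegree ≤ m) (hB0 : 0 < B) (hB : 2 * (B - 1) + m < p)
    (hdim : K * (B + J + K * m) < 2 * J * B) (hK : K < p) (σ : ZMod p) (hσ : σ ≠ 0)
    (S : Finset (ZMod p)) (hS : ∀ x ∈ S, f.eval x ^ q = σ) :
    K * S.card ≤ K * m + (B - 1) + q * m + (J - 1) * p := by
  classical
  rcases Nat.eq_zero_or_pos K with hK0 | hK0
  · subst hK0; simp
  have hq0 : q ≠ 0 := by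
    rintro rfl
    exact (Fact.out : p.Prime).one_lt.ne' (by simpa using hq)
  obtain ⟨r, s, hr, hs, hne, hker⟩ := stepanov_kernel f σ K (K + q) K B J m hm hB0 hdim
  have hnz := stepanov_ne_zero q hq f α hα hf0 m B hm hB J r s hr hs hne
  have hf : f ≠ 0 := by rintro rfl; simp at hf0
  set P : (ZMod p)[X] := f ^ K * ∑ j ∈ Finset.range J, (r j + s j * f ^ q) * X ^ (p * j) with hP
  have hP0 : P ≠ 0 := mul_ne_zero (pow_ne_zero _ hf) hnz
  have hroot : ∀ x ∈ S, K ≤ P.rootMultiplicity x := by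
    intro x hx
    have hfx : f.eval x ≠ 0 := by
      intro h
      have := hS x hx
      rw [h, zero_pow hq0] at this
      exact hσ this.symm
    have hlt := (lt_rootMultiplicity_iff_isRoot_iterate_derivative_of_mem_nonZeroDivisors
      (t := x) (n := K - 1) hP0 (by
        apply mem_nonZeroDivisors_of_ne_zero
        rw [Ne, ZMod.natCast_eq_zero_iff, (Fact.out : p.Prime).dvd_factorial]
        omega)).2 ?_
    · omega
    intro k hk
    have hkK : k < K := by omega
    have hPsum : P = ∑ j ∈ Finset.range J, (f ^ K * r j * X ^ (p * j)
        + f ^ (K + q) * s j * X ^ (p * j)) := by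
      rw [hP, Finset.mul_sum]
      refine Finset.sum_congr rfl fun j _ => ?_
      rw [pow_add]; ring
    have hder : ∀ j : ℕ, derivative ((X : (ZMod p)[X]) ^ (p * j)) = 0 := fun j => by
      simp [derivative_X_pow]
    have hQ := congrArg (eval x) (hker k hkK)
    rw [IsRoot.def, hPsum, iterate_derivative_sum, eval_finsetSum]
    rw [eval_finsetSum, eval_zero] at hQ
    have : ∀ j ∈ Finset.range J, eval x (derivative^[k] (f ^ K * r j * X ^ (p * j)
        + f ^ (K + q) * s j * X ^ (p * j))) = f.eval x ^ (K - k) *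
        eval x ((stepOp f K k (r j) + C σ * stepOp f (K + q) k (s j)) * X ^ j) := by
      intro j _
      rw [iterate_map_add, iterate_derivative_stepOp _ _ (hder j) _ _ hkK.le,
        iterate_derivative_stepOp _ _ (hder j) _ _ (by omega)]
      have e1 : K + q - k = (K - k) + q := by omega
      rw [e1, pow_add]
      simp only [eval_add, eval_mul, eval_pow, eval_X, eval_C, hS x hx, pow_mul, ZMod.pow_card]
      ring
    rw [Finset.sum_congr rfl this, ← Finset.mul_sum, hQ, mul_zero]
  have hcard : K * S.card ≤ P.roots.card := by
    have : K • S.val ≤ P.roots := by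
      rw [Multiset.le_iff_count]
      intro x
      rw [Multiset.count_nsmul, count_roots]
      by_cases hx : x ∈ S
      · rw [Multiset.count_eq_one_of_mem S.nodup hx, mul_one]
        exact hroot x hx
      · rw [Multiset.count_eq_zero_of_notMem hx]; simp
    have := Multiset.card_le_card this
    simpa using this
  refine hcard.trans ((card_roots' P).trans ?_)
  rw [hP]
  refine natDegree_mul_le.trans ?_
  have h1 : (f ^ K).natDegree ≤ K * m := natDegree_pow_le.trans (Nat.mul_le_mul_left _ hm)
  have h2 : (∑ j ∈ Finset.range J, (r j + s j * f ^ q) * X ^ (p * j)).natDegree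
      ≤ (B - 1) + q * m + (J - 1) * p := by
    refine natDegree_sum_le_of_forall_le _ _ fun j hj => ?_
    refine natDegree_mul_le.trans ?_
    rw [natDegree_X_pow]
    have h3 : p * j ≤ (J - 1) * p := by
      rw [mul_comm]
      exact Nat.mul_le_mul_right _ (by have := Finset.mem_range.1 hj; omega)
    have h4 : (r j + s j * f ^ q).natDegree ≤ (B - 1) + q * m := by
      refine (natDegree_add_le _ _).trans (max_le ?_ ?_)
      · have := hr j; omega
      · refine natDegree_mul_le.trans ?_
        have := hs j
        have h5 : (f ^ q).natDegree ≤ q * m := natDegree_pow_le.trans (Nat.mul_le_mul_left _ hm)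
        omega
    omega
  omega
end

/-! ### Character sums and runs of the quadratic character -/

section
open Polynomial

/-- The polynomial `∏ (X + t)` over `t ∈ A`. -/
noncomputable def shiftPoly (p : ℕ) (A : Finset ℕ) : (ZMod p)[X] :=
  ∏ t ∈ A, (X + C (t : ZMod p))

lemma eval_shiftPoly (p : ℕ) (A : Finset ℕ) (x : ZMod p) :
    (shiftPoly p A).eval x = ∏ t ∈ A, (x + t) := by
  simp [shiftPoly, eval_prod]

lemma natDegree_shiftPoly (p : ℕ) [Fact p.Prime] (A : Finset ℕ) :
    (shiftPoly p A).natDegree = A.card := by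
  rw [shiftPoly, natDegree_prod_of_monic _ _ fun t _ => monic_X_add_C _]
  simp only [natDegree_X_add_C, Finset.sum_const, smul_eq_mul, mul_one]

lemma rootMultiplicity_shiftPoly (p : ℕ) [Fact p.Prime] (A : Finset ℕ) (hA : ∀ t ∈ A, t < p)
    (a : ℕ) (ha : a ∈ A) : (shiftPoly p A).rootMultiplicity (-(a : ZMod p)) = 1 := by
  classical
  rw [shiftPoly, ← Finset.mul_prod_erase _ _ ha]
  have e : (X + C (a : ZMod p)) = X - C (-(a : ZMod p)) := by simp
  have hne : ∏ t ∈ A.erase a, (X + C (t : ZMod p)) ≠ 0 :=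
    Finset.prod_ne_zero_iff.2 fun t _ => (monic_X_add_C _).ne_zero
  rw [rootMultiplicity_mul (mul_ne_zero (monic_X_add_C _).ne_zero hne), e,
    rootMultiplicity_X_sub_C_self, rootMultiplicity_eq_zero]
  rw [IsRoot.def, eval_prod, Finset.prod_eq_zero_iff]
  rintro ⟨t, ht, h⟩
  have hta : (t : ZMod p) = a := by
    simp only [eval_add, eval_X, eval_C] at h
    linear_combination h
  rw [ZMod.natCast_eq_natCast_iff', Nat.mod_eq_of_lt (hA t (Finset.mem_of_mem_erase ht)),
    Nat.mod_eq_of_lt (hA a ha)] at hta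
  exact Finset.ne_of_mem_erase ht hta

/-- Stepanov's estimate with `K` about `√p`, `B` about `(p - m) / 2` and `J` about
`√p / 2 + 4 m`. -/
lemma stepanov_bound {p : ℕ} [Fact p.Prime] (A : Finset ℕ) (hA : ∀ t ∈ A, 0 < t ∧ t < p)
    (m : ℕ) (hm : A.card = m) (hm0 : 0 < m) (hp64 : 64 ≤ p) (hpm : 4 * (m + 1) ≤ p)
    (σ : ZMod p) (hσ : σ ≠ 0) (S : Finset (ZMod p))
    (hS : ∀ x ∈ S, (shiftPoly p A).eval x ^ (p / 2) = σ) :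
    (S.card : ℝ) ≤ p / 2 + 17 * m * √p := by
  obtain ⟨a, ha⟩ : A.Nonempty := Finset.card_pos.1 (by omega)
  have hodd : p = 2 * (p / 2) + 1 := by
    have := (Fact.out : p.Prime).eq_two_or_odd
    omega
  set K := Nat.sqrt p with hKdef
  have hK1 : K * K ≤ p := Nat.sqrt_le p
  have hK2 : p < (K + 1) * (K + 1) := Nat.lt_succ_sqrt p
  have hK8 : 8 ≤ K := Nat.le_sqrt.2 (by omega)
  obtain ⟨B, hBdef⟩ : ∃ B, B = (p - m) / 2 := ⟨_, rfl⟩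
  obtain ⟨h, hh⟩ : ∃ h, h = K / 2 := ⟨_, rfl⟩
  have hdim : K * (B + (h + 4 * m + 4) + K * m) < 2 * (h + 4 * m + 4) * B := by
    have hB8 : 3 * p ≤ 8 * B := by omega
    have hKh : K ≤ 2 * h + 1 := by omega
    have hKh' : 2 * h ≤ K := by omega
    have h1 : 8 * K ≤ p := by nlinarith
    have h2 : K * K * m ≤ p * m := Nat.mul_le_mul_right _ hK1
    have h3 : 8 * K * m ≤ p * m := Nat.mul_le_mul_right _ h1
    have h4 : 3 * p * m ≤ 8 * B * m := Nat.mul_le_mul_right _ hB8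
    have h5 : K * B ≤ (2 * h + 1) * B := Nat.mul_le_mul_right _ hKh
    have h6 : K * (2 * h) ≤ K * K := Nat.mul_le_mul_left _ hKh'
    nlinarith
  have hf0 : (shiftPoly p A).eval 0 ≠ 0 := by
    rw [eval_shiftPoly, Finset.prod_ne_zero_iff]
    intro t ht
    rw [zero_add, Ne, ZMod.natCast_eq_zero_iff]
    exact Nat.not_dvd_of_pos_of_lt (hA t ht).1 (hA t ht).2
  have hcount := stepanov_count (p / 2) hodd (shiftPoly p A) _
    (rootMultiplicity_shiftPoly p A (fun t ht => (hA t ht).2) a ha) hf0 m B (h + 4 * m + 4) K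
    (by rw [natDegree_shiftPoly, hm]) (by omega) (by omega) hdim (by nlinarith) σ hσ S hS
  have hc2 : 2 * (K * S.card) ≤ 2 * (K * m) + K * p + p * (9 * m + 7) := by
    have h1 : 2 * (p / 2) * m ≤ p * m := Nat.mul_le_mul_right _ (by omega)
    have h2 : (h + 4 * m + 4 - 1) * p = h * p + (4 * m + 3) * p := by
      rw [← add_mul]; rfl
    have h3 : 2 * h * p ≤ K * p := Nat.mul_le_mul_right _ (by omega)
    have h4 : 2 * (B - 1) ≤ p := by omega
    rw [h2] at hcount
    nlinarith
  have hc3 : 2 * ((K : ℝ) * S.card) ≤ 2 * (K * m) + K * p + p * (9 * m + 7) := by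
    exact_mod_cast hc2
  have hs0 : 0 ≤ √(p : ℝ) := Real.sqrt_nonneg _
  have hss : √(p : ℝ) * √p = p := Real.mul_self_sqrt (by positivity)
  have hs1 : 1 ≤ √(p : ℝ) := by
    rw [Real.one_le_sqrt]; exact_mod_cast (by omega : 1 ≤ p)
  have hsK : √(p : ℝ) ≤ 2 * K := by
    rw [Real.sqrt_le_left (by positivity)]
    have : p ≤ (2 * K) ^ 2 := by nlinarith
    exact_mod_cast this
  have hKpos : (0 : ℝ) < K := by exact_mod_cast (by omega : 0 < K)
  have hm1 : (1 : ℝ) ≤ m := by exact_mod_cast hm0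
  have h1 : (p : ℝ) * (9 * m + 7) ≤ 2 * K * (√p * (9 * m + 7)) := by
    have : (p : ℝ) ≤ 2 * K * √p := by nlinarith
    have := mul_le_mul_of_nonneg_right this (by positivity : (0 : ℝ) ≤ 9 * m + 7)
    linarith
  have h2 : (2 * K : ℝ) * S.card ≤ 2 * K * (p / 2 + m + √p * (9 * m + 7)) := by
    linarith
  have h3 := le_of_mul_le_mul_left h2 (by positivity)
  have h4 : (m : ℝ) ≤ m * √p := le_mul_of_one_le_right (by positivity) hs1
  have h5 : √(p : ℝ) ≤ m * √p := le_mul_of_one_le_left hs0 hm1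
  linarith

/-- Weil's bound, up to the constant, for sums of the quadratic character over a product of
distinct linear factors: the values `1` and `-1` are both taken at most `p / 2 + O(m √p)` times, and
together they are taken at all but `m` points. -/
lemma abs_sum_quadraticChar_le {p : ℕ} [Fact p.Prime] (A : Finset ℕ)
    (hA : ∀ t ∈ A, 0 < t ∧ t < p) (m : ℕ) (hm : A.card = m) (hm0 : 0 < m) (hp64 : 64 ≤ p)
    (hpm : 4 * (m + 1) ≤ p) :
    |((∑ x : ZMod p, ∏ t ∈ A, quadraticChar (ZMod p) (x + t) : ℤ) : ℝ)| ≤ 35 * m * √p := by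
  classical
  set f := shiftPoly p A with hf
  have hchar : ringChar (ZMod p) ≠ 2 := by rw [ZMod.ringChar_zmod_n]; omega
  have hpow : ∀ x : ZMod p, ((∏ t ∈ A, quadraticChar (ZMod p) (x + t) : ℤ) : ZMod p)
      = f.eval x ^ (p / 2) := by
    intro x
    rw [hf, eval_shiftPoly, ← map_prod, quadraticChar_eq_pow_of_char_ne_two' hchar, ZMod.card]
  have htri : ∀ x : ZMod p, (∏ t ∈ A, quadraticChar (ZMod p) (x + t) : ℤ) = 0 ∧ f.eval x = 0 ∨
      (∏ t ∈ A, quadraticChar (ZMod p) (x + t) : ℤ) = 1 ∨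
      (∏ t ∈ A, quadraticChar (ZMod p) (x + t) : ℤ) = -1 := by
    intro x
    rw [hf, eval_shiftPoly, ← map_prod]
    by_cases h : ∏ t ∈ A, (x + (t : ZMod p)) = 0
    · left; simp [h]
    · right; exact quadraticChar_dichotomy h
  set g : ZMod p → ℤ := fun x => ∏ t ∈ A, quadraticChar (ZMod p) (x + t) with hg
  set Sp := Finset.univ.filter fun x => g x = 1 with hSp
  set Sm := Finset.univ.filter fun x => g x = -1 with hSm
  set Z := Finset.univ.filter fun x => f.eval x = 0 with hZ
  have b1 : (Sp.card : ℝ) ≤ p / 2 + 17 * m * √p :=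
    stepanov_bound A hA m hm hm0 hp64 hpm 1 one_ne_zero Sp fun x hx => by
      rw [← hf, ← hpow x]
      have : g x = 1 := (Finset.mem_filter.1 hx).2
      simp only [hg] at this
      rw [this]; simp
  have b2 : (Sm.card : ℝ) ≤ p / 2 + 17 * m * √p :=
    stepanov_bound A hA m hm hm0 hp64 hpm (-1) (neg_ne_zero.2 one_ne_zero) Sm fun x hx => by
      rw [← hf, ← hpow x]
      have : g x = -1 := (Finset.mem_filter.1 hx).2
      simp only [hg] at this
      rw [this]; simp
  have hf0 : f ≠ 0 := (monic_prod_of_monic _ _ fun t _ => monic_X_add_C _).ne_zero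
  have b3 : Z.card ≤ m := by
    have : Z ⊆ f.roots.toFinset := fun x hx => by
      rw [Multiset.mem_toFinset, mem_roots hf0]
      exact (Finset.mem_filter.1 hx).2
    calc Z.card ≤ f.roots.toFinset.card := Finset.card_le_card this
      _ ≤ f.roots.card := Multiset.toFinset_card_le _
      _ ≤ f.natDegree := card_roots' f
      _ = m := by rw [hf, natDegree_shiftPoly, hm]
  have hsum : ∑ x, g x = (Sp.card : ℤ) - Sm.card := by
    rw [hSp, hSm, Finset.card_filter, Finset.card_filter]
    push_cast
    rw [← Finset.sum_sub_distrib]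
    refine Finset.sum_congr rfl fun x _ => ?_
    rcases htri x with h | h | h
    · have : g x = 0 := h.1
      simp [this]
    · have : g x = 1 := h
      simp [this]
    · have : g x = -1 := h
      simp [this]
  have hcov : p ≤ Sp.card + Sm.card + Z.card := by
    calc p = (Finset.univ : Finset (ZMod p)).card := by rw [Finset.card_univ, ZMod.card]
      _ ≤ (Sp ∪ Sm ∪ Z).card := Finset.card_le_card fun x _ => by
          simp only [hSp, hSm, hZ, Finset.mem_union, Finset.mem_filter, Finset.mem_univ, true_and]
          rcases htri x with h | h | h
          · exact Or.inr h.2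
          · exact Or.inl (Or.inl h)
          · exact Or.inl (Or.inr h)
      _ ≤ _ := (Finset.card_union_le _ _).trans (Nat.add_le_add_right (Finset.card_union_le _ _) _)
  have hcov' : (p : ℝ) ≤ Sp.card + Sm.card + m := by
    exact_mod_cast hcov.trans (Nat.add_le_add_left b3 _)
  have hs1 : 1 ≤ √(p : ℝ) := by
    rw [Real.one_le_sqrt]; exact_mod_cast (by omega : 1 ≤ p)
  have h4 : (m : ℝ) ≤ m * √p := le_mul_of_one_le_right (by positivity) hs1
  rw [hsum, abs_le]
  push_cast
  constructor <;> linarith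

end

/-- Off-diagonal terms of the second moment: the factors common to `J` and `J'` are squares, and
the symmetric difference is a nonempty set to which `abs_sum_quadraticChar_le` applies. -/
lemma abs_sum_two_le {p : ℕ} [Fact p.Prime] (r T : ℕ) (hT : T < p) (hp64 : 64 ≤ p)
    (hpr : 4 * (2 * r + 1) ≤ p) (J J' : Finset ℕ) (hJ : J ∈ (Finset.Icc 1 T).powersetCard r)
    (hJ' : J' ∈ (Finset.Icc 1 T).powersetCard r) (hne : J ≠ J') :
    ((∑ z : ZMod p, (∏ t ∈ J, quadraticChar (ZMod p) (z + t)) *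
      ∏ t ∈ J', quadraticChar (ZMod p) (z + t) : ℤ) : ℝ) ≤ 71 * r * √p := by
  classical
  rw [Finset.mem_powersetCard] at hJ hJ'
  have hdisj : Disjoint (J \ J') (J' \ J) := by
    rw [Finset.disjoint_left]; intro x hx hx'
    simp only [Finset.mem_sdiff] at hx hx'; tauto
  set D := (J \ J') ∪ (J' \ J) with hD
  set I := J ∩ J' with hI
  have hDsub : ∀ t ∈ D, 0 < t ∧ t < p := by
    intro t ht
    have : t ∈ Finset.Icc 1 T := by
      simp only [hD, Finset.mem_union, Finset.mem_sdiff] at ht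
      rcases ht with h | h
      · exact hJ.1 h.1
      · exact hJ'.1 h.1
    rw [Finset.mem_Icc] at this; omega
  have hDcard : D.card ≤ 2 * r := by
    have h1 := Finset.card_union_le (J \ J') (J' \ J)
    have h2 := Finset.card_le_card (Finset.sdiff_subset : J \ J' ⊆ J)
    have h3 := Finset.card_le_card (Finset.sdiff_subset : J' \ J ⊆ J')
    have h4 := hJ.2
    have h5 := hJ'.2
    rw [hD]
    omega
  have hDpos : 0 < D.card := by
    rw [Finset.card_pos, Finset.nonempty_iff_ne_empty]
    intro h
    rw [hD, Finset.union_eq_empty, Finset.sdiff_eq_empty_iff_subset,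
      Finset.sdiff_eq_empty_iff_subset] at h
    exact hne (Finset.Subset.antisymm h.1 h.2)
  have hIcard : I.card ≤ r := by
    exact (Finset.card_le_card (Finset.inter_subset_left : J ∩ J' ⊆ J)).trans hJ.2.le
  have hweil := abs_sum_quadraticChar_le (p := p) D hDsub D.card rfl hDpos hp64 (by omega)
  -- replace the squared factors by one, at the cost of their zeros
  have hpt : ∀ z : ZMod p, (∏ t ∈ J, quadraticChar (ZMod p) (z + t)) *
      ∏ t ∈ J', quadraticChar (ZMod p) (z + t) ≤ ∏ t ∈ D, quadraticChar (ZMod p) (z + t)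
        + ∑ t ∈ I, if z = -(t : ZMod p) then 1 else 0 := by
    intro z
    have e1 : (∏ t ∈ J, quadraticChar (ZMod p) (z + t)) *
      ∏ t ∈ J', quadraticChar (ZMod p) (z + t) = (∏ t ∈ D, quadraticChar (ZMod p) (z + t)) *
        ∏ t ∈ I, quadraticChar (ZMod p) (z + t) ^ 2 := by
      rw [hD, Finset.prod_union hdisj, Finset.prod_pow]
      have h1 := Finset.prod_inter_mul_prod_sdiff J J' fun t => quadraticChar (ZMod p) (z + t)
      have h2 := Finset.prod_inter_mul_prod_sdiff J' J fun t => quadraticChar (ZMod p) (z + t)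
      rw [Finset.inter_comm] at h2
      rw [← h1, ← h2]; ring
    rw [e1]
    by_cases h : ∃ t ∈ I, z = -(t : ZMod p)
    · obtain ⟨t, ht, hz⟩ := h
      have e2 : ∏ t ∈ I, quadraticChar (ZMod p) (z + t) ^ 2 = 0 :=
        Finset.prod_eq_zero ht (by simp [hz])
      have e3 : (1 : ℤ) ≤ ∑ t ∈ I, if z = -(t : ZMod p) then 1 else 0 := by
        refine le_trans ?_ (Finset.single_le_sum
          (f := fun t : ℕ => if z = -(t : ZMod p) then (1 : ℤ) else 0)
          (fun i _ => by split_ifs <;> simp) ht)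
        simp [hz]
      have e4 : (-1 : ℤ) ≤ ∏ t ∈ D, quadraticChar (ZMod p) (z + t) := by
        rw [← map_prod]
        by_cases h0 : ∏ t ∈ D, (z + (t : ZMod p)) = 0
        · simp [h0]
        · rcases quadraticChar_dichotomy h0 with h | h <;> simp [h]
      rw [e2]; linarith
    · push Not at h
      have e2 : ∏ t ∈ I, quadraticChar (ZMod p) (z + t) ^ 2 = 1 := by
        refine Finset.prod_eq_one fun t ht => quadraticChar_sq_one fun h0 => h t ht ?_
        linear_combination h0
      rw [e2, mul_one]
      have : (0 : ℤ) ≤ ∑ t ∈ I, if z = -(t : ZMod p) then 1 else 0 :=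
        Finset.sum_nonneg fun i _ => by split_ifs <;> simp
      linarith
  have hsum := Finset.sum_le_sum fun z (_ : z ∈ (Finset.univ : Finset (ZMod p))) => hpt z
  rw [Finset.sum_add_distrib, Finset.sum_comm (s := Finset.univ) (t := I)] at hsum
  simp only [Finset.sum_ite_eq', Finset.mem_univ, if_true, Finset.sum_const, nsmul_eq_mul,
    mul_one] at hsum
  have hs1 : 1 ≤ √(p : ℝ) := by
    rw [Real.one_le_sqrt]; exact_mod_cast (by omega : 1 ≤ p)
  have h1 : ((∑ z : ZMod p, (∏ t ∈ J, quadraticChar (ZMod p) (z + t)) *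
      ∏ t ∈ J', quadraticChar (ZMod p) (z + t) : ℤ) : ℝ) ≤
      ((∑ z : ZMod p, ∏ t ∈ D, quadraticChar (ZMod p) (z + t) : ℤ) : ℝ) + I.card := by
    exact_mod_cast hsum
  have h2 := (abs_le.1 hweil).2
  have h3 : (I.card : ℝ) ≤ r := by exact_mod_cast hIcard
  have h4 : (D.card : ℝ) ≤ 2 * r := by exact_mod_cast hDcard
  have h5 : (r : ℝ) ≤ r * √p := le_mul_of_one_le_right (by positivity) hs1
  have h6 : (D.card : ℝ) * √p ≤ 2 * r * √p := mul_le_mul_of_nonneg_right h4 (by positivity)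
  linarith

/-- Few points of `ZMod p` are followed by a run of `T` equal values of the quadratic character.
At each such point the `r`-th elementary symmetric function of `χ (z + 1), …, χ (z + T)` has the
extreme value `± (T.choose r)`, and its second moment over all `z` is known. -/
lemma card_run_le {p : ℕ} [Fact p.Prime] (r T : ℕ) (hT : T < p) (hp64 : 64 ≤ p)
    (hpr : 4 * (2 * r + 1) ≤ p) (σ : ℤ) (hσ : σ ^ 2 = 1) (S : Finset (ZMod p))
    (hS : ∀ z ∈ S, ∀ t ∈ Finset.Icc 1 T, quadraticChar (ZMod p) (z + (t : ℕ)) = σ) :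
    (S.card : ℝ) * (T.choose r : ℝ) ^ 2
      ≤ T.choose r * p + (T.choose r : ℝ) ^ 2 * (71 * r * √p) := by
  classical
  set φ : Finset ℕ → ZMod p → ℤ := fun J z => ∏ t ∈ J, quadraticChar (ZMod p) (z + (t : ℕ))
    with hφ
  set P := (Finset.Icc 1 T).powersetCard r with hP
  have hPcard : P.card = T.choose r := by simp [hP]
  have hφ1 : ∀ J z, φ J z ^ 2 ≤ 1 := by
    intro J z
    simp only [hφ, ← map_prod]
    by_cases h : ∏ t ∈ J, (z + (t : ZMod p)) = 0
    · simp [h]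
    · rw [quadraticChar_sq_one h]
  have hlow : (S.card : ℤ) * (T.choose r : ℤ) ^ 2 ≤ ∑ z : ZMod p, (∑ J ∈ P, φ J z) ^ 2 := by
    calc (S.card : ℤ) * (T.choose r : ℤ) ^ 2 = ∑ z ∈ S, (∑ J ∈ P, φ J z) ^ 2 := by
          rw [← nsmul_eq_mul, ← Finset.sum_const]
          refine Finset.sum_congr rfl fun z hz => ?_
          have : ∀ J ∈ P, φ J z = σ ^ r := by
            intro J hJ
            rw [hP, Finset.mem_powersetCard] at hJ
            simp only [hφ]
            rw [Finset.prod_congr rfl fun t ht => hS z hz t (hJ.1 ht), Finset.prod_const, hJ.2]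
          rw [Finset.sum_congr rfl this, Finset.sum_const, hPcard, nsmul_eq_mul, mul_pow,
            ← pow_mul, mul_comm r 2, pow_mul, hσ, one_pow, mul_one]
      _ ≤ _ := Finset.sum_le_sum_of_subset_of_nonneg (Finset.subset_univ _)
          fun _ _ _ => sq_nonneg _
  have hexp : ∑ z : ZMod p, (∑ J ∈ P, φ J z) ^ 2
      = ∑ J ∈ P, ∑ J' ∈ P, ∑ z : ZMod p, φ J z * φ J' z := by
    simp only [pow_two, Finset.sum_mul_sum]
    rw [Finset.sum_comm]
    refine Finset.sum_congr rfl fun J _ => ?_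
    rw [Finset.sum_comm]
  have hpair : ∀ J ∈ P, ∀ J' ∈ P, ((∑ z : ZMod p, φ J z * φ J' z : ℤ) : ℝ)
      ≤ (if J = J' then (p : ℝ) else 0) + 71 * r * √p := by
    intro J hJ J' hJ'
    have h0 : (0 : ℝ) ≤ 71 * r * √p := by positivity
    by_cases h : J = J'
    · subst h
      have : (∑ z : ZMod p, φ J z * φ J z) ≤ p := by
        calc (∑ z : ZMod p, φ J z * φ J z) ≤ ∑ z : ZMod p, 1 :=
              Finset.sum_le_sum fun z _ => by rw [← pow_two]; exact hφ1 J z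
          _ = p := by simp
      have : ((∑ z : ZMod p, φ J z * φ J z : ℤ) : ℝ) ≤ p := by exact_mod_cast this
      rw [if_pos rfl]; linarith
    · rw [if_neg h, zero_add]
      exact abs_sum_two_le r T hT hp64 hpr J J' hJ hJ' h
  have hup : ((∑ z : ZMod p, (∑ J ∈ P, φ J z) ^ 2 : ℤ) : ℝ)
      ≤ T.choose r * p + (T.choose r : ℝ) ^ 2 * (71 * r * √p) := by
    rw [hexp]
    rw [Int.cast_sum]
    calc ∑ J ∈ P, ((∑ J' ∈ P, ∑ z : ZMod p, φ J z * φ J' z : ℤ) : ℝ)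
        ≤ ∑ J ∈ P, ∑ J' ∈ P, ((if J = J' then (p : ℝ) else 0) + 71 * r * √p) :=
          Finset.sum_le_sum fun J hJ => by
            rw [Int.cast_sum]
            exact Finset.sum_le_sum fun J' hJ' => hpair J hJ J' hJ'
      _ = _ := by
          have : ∀ J ∈ P, ∑ J' ∈ P, ((if J = J' then (p : ℝ) else 0) + 71 * r * √p)
              = p + T.choose r * (71 * r * √p) := fun J hJ => by
            rw [Finset.sum_add_distrib, Finset.sum_ite_eq, if_pos hJ, Finset.sum_const, hPcard,
              nsmul_eq_mul]
          rw [Finset.sum_congr rfl this, Finset.sum_const, hPcard, nsmul_eq_mul]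
          ring
  refine le_trans ?_ hup
  exact_mod_cast hlow

/-! ### Divisors, gcd sums and window counts -/

/-- The divisor bound. In the product over the primes dividing `n`, a prime `q` with
`q ^ ε ≥ 2` contributes a factor at most `1`, and each of the boundedly many smaller primes a
factor at most `A`. -/
lemma exists_card_divisors_le (ε : ℝ) (hε : 0 < ε) :
    ∃ C : ℝ, 1 ≤ C ∧ ∀ n : ℕ, n ≠ 0 → (n.divisors.card : ℝ) ≤ C * (n : ℝ) ^ ε := by
  set A : ℝ := max 1 (1 / (ε * Real.log 2)) with hA
  obtain ⟨Q, hQ⟩ := exists_nat_ge ((2 : ℝ) ^ (1 / ε))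
  have hA1 : 1 ≤ A := le_max_left _ _
  have hlog2 : 0 < Real.log 2 := Real.log_pos one_lt_two
  refine ⟨A ^ Q, one_le_pow₀ hA1, fun n hn => ?_⟩
  have hfac : (n : ℝ) ^ ε = ∏ q ∈ n.primeFactors, ((q : ℝ) ^ n.factorization q) ^ ε := by
    conv_lhs => rw [← Nat.prod_factorization_pow_eq_self hn]
    rw [Finsupp.prod, Nat.support_factorization]
    push_cast
    rw [Real.finsetProd_rpow _ _ fun i _ => by positivity]
  rw [Nat.card_divisors hn, hfac]
  push_cast
  have hterm : ∀ q ∈ n.primeFactors, ((n.factorization q : ℝ) + 1) ≤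
      (if q < Q then A else 1) * ((q : ℝ) ^ n.factorization q) ^ ε := by
    intro q hq
    have hq2 : (2 : ℝ) ≤ q := by exact_mod_cast (Nat.prime_of_mem_primeFactors hq).two_le
    set e := n.factorization q
    have hpow : ((q : ℝ) ^ e) ^ ε = ((q : ℝ) ^ ε) ^ e := by
      rw [← Real.rpow_natCast, ← Real.rpow_natCast, ← Real.rpow_mul (by positivity),
        ← Real.rpow_mul (by positivity), mul_comm]
    split_ifs with h
    · have h1 : 1 + ε * Real.log 2 * e ≤ ((q : ℝ) ^ e) ^ ε := by
        have h3 : Real.exp (ε * Real.log 2 * e) ≤ ((q : ℝ) ^ e) ^ ε := by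
          rw [hpow, ← Real.rpow_natCast, ← Real.rpow_mul (by positivity),
            Real.rpow_def_of_pos (by positivity)]
          apply Real.exp_le_exp.2
          have := Real.log_le_log two_pos hq2
          have := mul_le_mul_of_nonneg_right this (by positivity : 0 ≤ ε * (e : ℝ))
          linarith
        have := Real.add_one_le_exp (ε * Real.log 2 * e)
        linarith
      have h2 : 1 ≤ A * (ε * Real.log 2) := by
        have := le_max_right 1 (1 / (ε * Real.log 2))
        rwa [← hA, div_le_iff₀ (by positivity)] at this
      have h4 := mul_le_mul_of_nonneg_left h1 (by linarith : 0 ≤ A)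
      have h5 := mul_le_mul_of_nonneg_right h2 (Nat.cast_nonneg e : (0 : ℝ) ≤ e)
      linarith
    · rw [one_mul, hpow]
      have h1 : (2 : ℝ) ≤ (q : ℝ) ^ ε := by
        have h2 : (2 : ℝ) ^ (1 / ε) ≤ q := hQ.trans (by exact_mod_cast not_lt.1 h)
        calc (2 : ℝ) = ((2 : ℝ) ^ (1 / ε)) ^ ε := by
              rw [← Real.rpow_mul two_pos.le, one_div, inv_mul_cancel₀ hε.ne', Real.rpow_one]
          _ ≤ _ := Real.rpow_le_rpow (by positivity) h2 hε.le
      calc (e : ℝ) + 1 ≤ 2 ^ e := by exact_mod_cast Nat.lt_two_pow_self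
        _ ≤ _ := pow_le_pow_left₀ two_pos.le h1 e
  calc ∏ q ∈ n.primeFactors, ((n.factorization q : ℝ) + 1)
      ≤ ∏ q ∈ n.primeFactors, ((if q < Q then A else 1) * ((q : ℝ) ^ n.factorization q) ^ ε) :=
        Finset.prod_le_prod (fun _ _ => by positivity) hterm
    _ = (∏ q ∈ n.primeFactors, (if q < Q then A else 1)) *
          ∏ q ∈ n.primeFactors, ((q : ℝ) ^ n.factorization q) ^ ε := Finset.prod_mul_distrib
    _ ≤ _ := by
      refine mul_le_mul_of_nonneg_right ?_ (Finset.prod_nonneg fun _ _ => by positivity)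
      rw [Finset.prod_ite, Finset.prod_const, Finset.prod_const_one, mul_one]
      refine pow_le_pow_right₀ hA1 ?_
      calc _ ≤ (Finset.range Q).card := Finset.card_le_card fun q hq => by
            simpa using (Finset.mem_filter.1 hq).2
        _ = Q := Finset.card_range Q

lemma sum_gcd_le (M m Δ : ℕ) (hm : m ≠ 0) (hΔ : m.divisors.card ≤ Δ) :
    ∑ m' ∈ Finset.Ioc M (2 * M), Nat.gcd m m' ≤ 2 * M * Δ := by
  calc ∑ m' ∈ Finset.Ioc M (2 * M), Nat.gcd m m'
      ≤ ∑ m' ∈ Finset.Ioc 0 (2 * M), Nat.gcd m m' :=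
        Finset.sum_le_sum_of_subset (Finset.Ioc_subset_Ioc_left (Nat.zero_le _))
    _ ≤ ∑ m' ∈ Finset.Ioc 0 (2 * M), ∑ e ∈ m.divisors, if e ∣ m' then e else 0 := by
        refine Finset.sum_le_sum fun m' _ => ?_
        refine le_trans ?_ (Finset.single_le_sum (f := fun e => if e ∣ m' then e else 0)
          (fun _ _ => Nat.zero_le _) (Nat.mem_divisors.2 ⟨Nat.gcd_dvd_left m m', hm⟩))
        simp [Nat.gcd_dvd_right]
    _ = ∑ e ∈ m.divisors, ∑ m' ∈ Finset.Ioc 0 (2 * M), if e ∣ m' then e else 0 :=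
        Finset.sum_comm
    _ ≤ ∑ e ∈ m.divisors, 2 * M := by
        refine Finset.sum_le_sum fun e _ => ?_
        rw [← Finset.sum_filter, Finset.sum_const, Nat.Ioc_filter_dvd_card_eq_div, smul_eq_mul]
        exact Nat.div_mul_le_self _ _
    _ ≤ 2 * M * Δ := by
        rw [Finset.sum_const, smul_eq_mul, mul_comm]
        exact Nat.mul_le_mul_left _ hΔ

lemma card_le_of_modEq (N d : ℕ) (s : Finset ℕ) (hs : ∀ x ∈ s, x < N)
    (h : ∀ x ∈ s, ∀ y ∈ s, (d : ℤ) ∣ (x : ℤ) - y) : s.card ≤ N / d + 1 := by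
  rw [← Finset.card_range (N / d + 1)]
  refine Finset.card_le_card_of_injOn (fun x => x / d) ?_ ?_
  · intro x hx
    simp only [Finset.coe_range, Set.mem_Iio]
    exact Nat.lt_succ_of_le (Nat.div_le_div_right (hs x hx).le)
  · intro x hx y hy hxy
    have h1 : x % d = y % d := by
      have := h y hy x hx
      exact (Nat.modEq_iff_dvd.2 this : x ≡ y [MOD d])
    have h2 : x / d = y / d := hxy
    rw [← Nat.div_add_mod x d, ← Nat.div_add_mod y d, h1, h2]

/-- Residues modulo `p` of the integers of absolute value at most `W`. -/
noncomputable def smallRes (p W : ℕ) : Finset (ZMod p) :=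
  (Finset.Icc (-(W : ℤ)) W).image fun v : ℤ => (v : ZMod p)

lemma mem_smallRes {p W : ℕ} {x : ZMod p} :
    x ∈ smallRes p W ↔ ∃ v : ℤ, -(W : ℤ) ≤ v ∧ v ≤ W ∧ (v : ZMod p) = x := by
  simp [smallRes, and_assoc]

/-- Residues modulo `p` of the integers from `0` to `2 * W`. -/
noncomputable def windowRes (p W : ℕ) : Finset (ZMod p) :=
  (Finset.Icc (0 : ℤ) (2 * W)).image fun v : ℤ => (v : ZMod p)

lemma mem_windowRes {p W : ℕ} {x : ZMod p} :
    x ∈ windowRes p W ↔ ∃ v : ℤ, 0 ≤ v ∧ v ≤ 2 * W ∧ (v : ZMod p) = x := by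
  simp [windowRes, and_assoc]

lemma card_windowRes_le (p W : ℕ) : (windowRes p W).card ≤ 2 * W + 1 := by
  refine Finset.card_image_le.trans ?_
  rw [Int.card_Icc]; omega

lemma intCast_inj_of_small {p : ℕ} {x y : ℤ} (h : (x : ZMod p) = y) (hxy : |x - y| < p) :
    x = y := by
  have h1 : (p : ℤ) ∣ x - y := by
    rw [← ZMod.intCast_zmod_eq_zero_iff_dvd, Int.cast_sub, h, sub_self]
  have := Int.eq_zero_of_abs_lt_dvd h1 hxy
  omega

/-- The number of points of the family `φ` (indexed by `s`) in the window starting at `y`. -/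
noncomputable def windowCount {p : ℕ} (W : ℕ) (s : Finset ℕ) (φ : ℕ → ZMod p) (y : ZMod p) : ℕ :=
  (s.filter fun i => φ i - y ∈ windowRes p W).card

/-- The number of pairs from two families whose difference is at most `W` in absolute value. -/
noncomputable def nearCount {p : ℕ} (W : ℕ) (s : Finset ℕ) (φ ψ : ℕ → ZMod p) : ℕ :=
  ((s ×ˢ s).filter fun x => φ x.1 - ψ x.2 ∈ smallRes p W).card

lemma sum_windowCount_mul {p : ℕ} [NeZero p] (W : ℕ) (s : Finset ℕ) (φ ψ : ℕ → ZMod p) :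
    ∑ y, windowCount W s φ y * windowCount W s ψ y = ∑ x ∈ s ×ˢ s,
      (Finset.univ.filter fun y : ZMod p => φ x.1 - y ∈ windowRes p W ∧
        ψ x.2 - y ∈ windowRes p W).card := by
  simp only [windowCount, Finset.card_filter, Finset.sum_mul_sum, Finset.sum_product]
  rw [Finset.sum_comm]
  refine Finset.sum_congr rfl fun i _ => ?_
  rw [Finset.sum_comm]
  refine Finset.sum_congr rfl fun j _ => Finset.sum_congr rfl fun y _ => ?_
  split_ifs <;> simp_all

/-- Two points at distance at most `W` lie together in at least `W + 1` windows of length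
`2 W + 1`. -/
lemma mul_nearCount_le {p : ℕ} [NeZero p] (W : ℕ) (hW : W < p) (s : Finset ℕ)
    (φ ψ : ℕ → ZMod p) :
    (W + 1) * nearCount W s φ ψ ≤ ∑ y, windowCount W s φ y * windowCount W s ψ y := by
  rw [sum_windowCount_mul, nearCount, Finset.card_filter, Finset.mul_sum]
  refine Finset.sum_le_sum fun x _ => ?_
  split_ifs with h
  swap
  · simp
  obtain ⟨v, hv1, hv2, hv⟩ := mem_smallRes.1 h
  rw [mul_one]
  calc W + 1 = (Finset.Icc (max v 0) (max v 0 + W)).card := by rw [Int.card_Icc]; omega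
    _ ≤ _ := by
      refine Finset.card_le_card_of_injOn (fun k : ℤ => φ x.1 - (k : ZMod p)) ?_ ?_
      · intro k hk
        simp only [Finset.coe_Icc, Set.mem_Icc] at hk
        simp only [Finset.coe_filter, Finset.mem_univ, true_and, Set.mem_ofPred_eq, mem_windowRes]
        refine ⟨⟨k, by omega, by omega, by simp⟩, ⟨k - v, by omega, by omega, ?_⟩⟩
        push_cast
        rw [hv]; ring
      · intro k hk k' hk' hkk
        simp only [Finset.coe_Icc, Set.mem_Icc] at hk hk'
        refine intCast_inj_of_small (p := p) (sub_right_injective hkk) ?_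
        rw [abs_lt]; omega

/-- Two points lying in a common window of length `2 W + 1` are at distance at most `2 W`, and at
most `2 W + 1` windows contain a given point. -/
lemma sum_windowCount_sq_le {p : ℕ} [NeZero p] (W : ℕ) (s : Finset ℕ) (φ : ℕ → ZMod p) :
    ∑ y, windowCount W s φ y * windowCount W s φ y
      ≤ (2 * W + 1) * nearCount (2 * W) s φ φ := by
  rw [sum_windowCount_mul, nearCount, Finset.card_filter, Finset.mul_sum]
  refine Finset.sum_le_sum fun x _ => ?_
  split_ifs with h
  · rw [mul_one]
    refine le_trans ?_ (card_windowRes_le p W)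
    refine Finset.card_le_card_of_injOn (fun y => φ x.1 - y) ?_ ?_
    · intro y hy
      exact (Finset.mem_filter.1 hy).2.1
    · intro y _ y' _ hyy
      exact sub_right_injective hyy
  · rw [mul_zero, Nat.le_zero, Finset.card_eq_zero, Finset.filter_eq_empty_iff]
    rintro y - ⟨h1, h2⟩
    obtain ⟨u, hu1, hu2, hu⟩ := mem_windowRes.1 h1
    obtain ⟨v, hv1, hv2, hv⟩ := mem_windowRes.1 h2
    refine h (mem_smallRes.2 ⟨u - v, by push_cast; omega, by push_cast; omega, ?_⟩)
    push_cast
    rw [hu, hv]; ring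

/-! ### Small values of `m (F g - F g')` modulo `p` -/

/-- A set is no larger than its image together with the pairs of distinct elements having the same
image: each element either is the chosen representative of its fibre or is paired with it. -/
lemma card_le_image_add_pairs {α β : Type*} [DecidableEq α] [DecidableEq β] (O : Finset α)
    (π : α → β) :
    O.card ≤ (O.image π).card + ((O ×ˢ O).filter fun x => π x.1 = π x.2 ∧ x.1 ≠ x.2).card := by
  classical
  rcases O.eq_empty_or_nonempty with rfl | ⟨o₀, -⟩
  · simp
  set ρ : β → α := fun b => if h : ∃ o ∈ O, π o = b then h.choose else o₀ with hρ
  have hρ1 : ∀ o ∈ O, ρ (π o) ∈ O ∧ π (ρ (π o)) = π o := fun o ho => by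
    have h : ∃ o' ∈ O, π o' = π o := ⟨o, ho, rfl⟩
    have : ρ (π o) = h.choose := by simp only [hρ]; rw [dif_pos h]
    rw [this]; exact h.choose_spec
  rw [← Finset.card_filter_add_card_filter_not (s := O) (fun o => o = ρ (π o))]
  refine add_le_add ?_ ?_
  · refine Finset.card_le_card_of_injOn π ?_ ?_
    · intro o ho
      exact Finset.mem_coe.2 (Finset.mem_image_of_mem _ (Finset.mem_filter.1 ho).1)
    · intro o ho o' ho' h
      rw [(Finset.mem_filter.1 ho).2, (Finset.mem_filter.1 ho').2, h]
  · refine Finset.card_le_card_of_injOn (fun o => (o, ρ (π o))) ?_ ?_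
    · intro o ho
      obtain ⟨h1, h2⟩ := Finset.mem_filter.1 ho
      have h3 := hρ1 o h1
      rw [Finset.mem_coe, Finset.mem_filter, Finset.mem_product]
      exact ⟨⟨h1, h3.1⟩, h3.2.symm, h2⟩
    · intro o _ o' _ h
      exact (Prod.ext_iff.1 h).1

/-- Positive and negative divisors of `n`. -/
def intDivs (n : ℕ) : Finset ℤ :=
  (n.divisors.image fun d : ℕ => (d : ℤ)) ∪ n.divisors.image fun d : ℕ => -(d : ℤ)

lemma card_intDivs_le (n : ℕ) : (intDivs n).card ≤ 2 * n.divisors.card := by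
  refine (Finset.card_union_le _ _).trans ?_
  have h1 := Finset.card_image_le (s := n.divisors) (f := fun d : ℕ => (d : ℤ))
  have h2 := Finset.card_image_le (s := n.divisors) (f := fun d : ℕ => -(d : ℤ))
  omega

lemma mem_intDivs {D x : ℤ} (hD : D ≠ 0) (h : x ∣ D) : x ∈ intDivs D.natAbs := by
  have h1 : x.natAbs ∈ D.natAbs.divisors :=
    Nat.mem_divisors.2 ⟨Int.natAbs_dvd_natAbs.2 h, Int.natAbs_ne_zero.2 hD⟩
  rw [intDivs, Finset.mem_union, Finset.mem_image, Finset.mem_image]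
  rcases Int.natAbs_eq x with h2 | h2
  · exact Or.inl ⟨_, h1, h2.symm⟩
  · exact Or.inr ⟨_, h1, h2.symm⟩

/-- The values `a g ^ 3 + c g` in `ZMod p`. -/
def cubicVal {p : ℕ} (a c : ZMod p) (g : ℕ) : ZMod p := a * (g : ZMod p) ^ 3 + c * g

/-- The integer `m u (w ^ 2 - w' ^ 2)` attached to two triples `(m, g₁, g₂)` sharing `m` and
`u = g₁ - g₂`, where `w` and `w'` are the two values of `g₁ + g₂`. -/
def prodD (x : (ℕ × ℕ × ℕ) × (ℕ × ℕ × ℕ)) : ℤ :=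
  (x.1.1 : ℤ) * ((x.1.2.1 : ℤ) - x.1.2.2) *
    (((x.1.2.1 : ℤ) + x.1.2.2 - (x.2.2.1 + x.2.2.2)) *
      ((x.1.2.1 : ℤ) + x.1.2.2 + (x.2.2.1 + x.2.2.2)))

/-- Counts triples `(m, g, g')` with `m (F g - F g')` small modulo `p`. Besides the diagonal, compare
two triples with the same `m` and the same `u = g - g'`: as `4 (F g - F g')` equals
`u (a (u ^ 2 + 3 w ^ 2) + 4 c)` with `w = g + g'`, subtracting the two relations eliminates `c` and
leaves `3 a m u (w ^ 2 - w' ^ 2)` equal to a small residue `4 (v - v')`. Given `v - v'`, the integer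
`m u (w ^ 2 - w' ^ 2)`, less than `p / 2` in absolute value, is determined, and the divisor bound
limits its factorizations. -/
lemma sum_nearCount_le {p : ℕ} [Fact p.Prime] (hp3 : 3 < p) (a c : ZMod p) (ha : a ≠ 0)
    (M G W Δ : ℕ) (hMG : 32 * M * G ^ 3 < p)
    (hΔ : ∀ n : ℕ, n ≠ 0 → n < p → n.divisors.card ≤ Δ) :
    ∑ m ∈ Finset.Ioc M (2 * M), nearCount W (Finset.Icc 1 G)
        (fun g => (m : ZMod p) * cubicVal a c g) (fun g => (m : ZMod p) * cubicVal a c g)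
      ≤ M * G + M * (2 * G + 1) + 16 * Δ ^ 4 * (4 * W + 1) := by
  classical
  set s := Finset.Icc 1 G with hs
  set R := Finset.Ioc M (2 * M) with hR
  have hRcard : R.card = M := by rw [hR, Nat.card_Ioc]; omega
  set O := (R ×ˢ (s ×ˢ s)).filter fun o : ℕ × ℕ × ℕ => o.2.1 ≠ o.2.2 ∧
    (o.1 : ZMod p) * cubicVal a c o.2.1 - (o.1 : ZMod p) * cubicVal a c o.2.2 ∈ smallRes p W
    with hO
  have hOmem : ∀ o ∈ O, (M < o.1 ∧ o.1 ≤ 2 * M) ∧ ((1 ≤ o.2.1 ∧ o.2.1 ≤ G) ∧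
      (1 ≤ o.2.2 ∧ o.2.2 ≤ G)) ∧ o.2.1 ≠ o.2.2 ∧ (o.1 : ZMod p) * cubicVal a c o.2.1 -
      (o.1 : ZMod p) * cubicVal a c o.2.2 ∈ smallRes p W := by
    intro o ho
    simpa [hO, hR, hs, and_assoc] using ho
  -- split off the diagonal
  have hsplit : ∑ m ∈ R, nearCount W s
        (fun g => (m : ZMod p) * cubicVal a c g) (fun g => (m : ZMod p) * cubicVal a c g)
      ≤ M * G + O.card := by
    have h1 : ∀ m ∈ R, nearCount W s (fun g => (m : ZMod p) * cubicVal a c g)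
        (fun g => (m : ZMod p) * cubicVal a c g) ≤ G + ((s ×ˢ s).filter fun x : ℕ × ℕ =>
          x.1 ≠ x.2 ∧ (m : ZMod p) * cubicVal a c x.1 - (m : ZMod p) * cubicVal a c x.2
            ∈ smallRes p W).card := by
      intro m _
      have : s.card = G := by simp [hs]
      rw [← this, ← Finset.diag_card s, nearCount]
      refine le_trans (Finset.card_le_card ?_) (Finset.card_union_le _ _)
      intro x hx
      obtain ⟨hx1, hx2⟩ := Finset.mem_filter.1 hx
      rw [Finset.mem_union, Finset.mem_diag, Finset.mem_filter]
      by_cases h : x.1 = x.2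
      · exact Or.inl ⟨(Finset.mem_product.1 hx1).1, h⟩
      · exact Or.inr ⟨hx1, h, hx2⟩
    refine (Finset.sum_le_sum h1).trans ?_
    rw [Finset.sum_add_distrib, Finset.sum_const, hRcard, smul_eq_mul, hO, Finset.card_filter,
      Finset.sum_product]
    simp only [Finset.card_filter]
    exact le_rfl
  -- triples with the same `m` and the same difference
  set π : ℕ × ℕ × ℕ → ℕ × ℤ := fun o => (o.1, (o.2.1 : ℤ) - o.2.2) with hπ
  have himg : (O.image π).card ≤ M * (2 * G + 1) := by
    have h1 : O.image π ⊆ R ×ˢ Finset.Icc (-(G : ℤ)) G := by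
      intro y hy
      obtain ⟨o, ho, rfl⟩ := Finset.mem_image.1 hy
      have := hOmem o ho
      simp only [hπ, Finset.mem_product, hR, Finset.mem_Ioc, Finset.mem_Icc]
      omega
    refine (Finset.card_le_card h1).trans ?_
    rw [Finset.card_product, hRcard, Int.card_Icc]
    refine Nat.mul_le_mul_left _ ?_
    omega
  have hv : ∀ o : ℕ × ℕ × ℕ, ∃ v : ℤ, o ∈ O → -(W : ℤ) ≤ v ∧ v ≤ W ∧
      (v : ZMod p) = (o.1 : ZMod p) * cubicVal a c o.2.1 -
        (o.1 : ZMod p) * cubicVal a c o.2.2 := by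
    intro o
    by_cases h : o ∈ O
    · obtain ⟨v, hv⟩ := mem_smallRes.1 (hOmem o h).2.2.2
      exact ⟨v, fun _ => hv⟩
    · exact ⟨0, fun h' => absurd h' h⟩
  choose v hv using hv
  set Q := (O ×ˢ O).filter fun x => π x.1 = π x.2 ∧ x.1 ≠ x.2 with hQ
  have hQmem : ∀ x ∈ Q, (x.1 ∈ O ∧ x.2 ∈ O) ∧ (x.1.1 = x.2.1 ∧
      (x.1.2.1 : ℤ) - x.1.2.2 = x.2.2.1 - x.2.2.2) ∧ x.1 ≠ x.2 := by
    intro x hx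
    obtain ⟨h1, h2, h3⟩ := Finset.mem_filter.1 hx
    exact ⟨Finset.mem_product.1 h1, Prod.ext_iff.1 h2, h3⟩
  have hDne : ∀ x ∈ Q, prodD x ≠ 0 := by
    rintro ⟨⟨m, g, g'⟩, ⟨m', k, k'⟩⟩ hx
    obtain ⟨⟨h1, h2⟩, ⟨h3, h4⟩, h5⟩ := hQmem _ hx
    have h1' := hOmem _ h1
    have h2' := hOmem _ h2
    simp only at h1' h2' h3 h4
    simp only [prodD]
    refine mul_ne_zero (mul_ne_zero (by omega) (by omega)) (mul_ne_zero ?_ (by omega))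
    intro h
    apply h5
    have e1 : g = k := by omega
    have e2 : g' = k' := by omega
    rw [h3, e1, e2]
  have hDle : ∀ x ∈ Q, |prodD x| ≤ 16 * M * G ^ 3 := by
    rintro ⟨⟨m, g, g'⟩, ⟨m', k, k'⟩⟩ hx
    obtain ⟨⟨h1, h2⟩, ⟨h3, h4⟩, h5⟩ := hQmem _ hx
    have h1' := hOmem _ h1
    have h2' := hOmem _ h2
    simp only at h1' h2' h3 h4
    simp only [prodD, abs_mul]
    have b1 : |(m : ℤ)| ≤ 2 * M := by rw [abs_le]; omega
    have b2 : |(g : ℤ) - g'| ≤ G := by rw [abs_le]; omega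
    have b3 : |(g : ℤ) + g' - (k + k')| ≤ G + G := by rw [abs_le]; omega
    have b4 : |(g : ℤ) + g' + (k + k')| ≤ 4 * G := by rw [abs_le]; omega
    calc |(m : ℤ)| * |(g : ℤ) - g'| * (|(g : ℤ) + g' - (k + k')| * |(g : ℤ) + g' + (k + k')|)
        ≤ (2 * M) * G * ((G + G) * (4 * G)) := by gcongr
      _ = 16 * M * G ^ 3 := by ring
  have hDv : ∀ x ∈ Q, ((4 * (v x.1 - v x.2) : ℤ) : ZMod p) = 3 * a * (prodD x : ZMod p) := by
    rintro ⟨⟨m, g, g'⟩, ⟨m', k, k'⟩⟩ hx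
    obtain ⟨⟨h1, h2⟩, ⟨h3, h4⟩, -⟩ := hQmem _ hx
    have e1 := (hv _ h1).2.2
    have e2 := (hv _ h2).2.2
    simp only at h3 h4 e1 e2
    have h4' : (g : ZMod p) = k - k' + g' := by
      have := congrArg (fun n : ℤ => (n : ZMod p)) h4
      push_cast at this
      linear_combination this
    subst h3
    simp only [prodD]
    push_cast
    rw [e1, e2]
    simp only [cubicVal, h4']
    ring
  have h3a : (3 : ZMod p) * a ≠ 0 := by
    refine mul_ne_zero ?_ ha
    have : ((3 : ℕ) : ZMod p) ≠ 0 := by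
      rw [Ne, ZMod.natCast_eq_zero_iff]
      exact Nat.not_dvd_of_pos_of_lt (by norm_num) hp3
    exact_mod_cast this
  have hQcard : Q.card ≤ 16 * Δ ^ 4 * (4 * W + 1) := by
    have hfib : ∀ b ∈ Q.image (fun x => v x.1 - v x.2),
        (Q.filter fun x => v x.1 - v x.2 = b).card ≤ 16 * Δ ^ 4 := by
      intro b hb
      obtain ⟨y, hy, rfl⟩ := Finset.mem_image.1 hb
      have hD : ∀ x ∈ Q, v x.1 - v x.2 = v y.1 - v y.2 → prodD x = prodD y := by
        intro x hx hxy
        have e1 := hDv x hx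
        rw [hxy, hDv y hy] at e1
        refine (intCast_inj_of_small (mul_left_cancel₀ h3a e1) ?_).symm
        have b1 := hDle x hx
        have b2 := hDle y hy
        have b3 : (32 * M * G ^ 3 : ℤ) < p := by exact_mod_cast hMG
        rw [abs_le] at b1 b2
        rw [abs_lt]
        constructor <;> linarith
      set n := (prodD y).natAbs with hn
      have hnp : n < p := by
        have b1 := hDle y hy
        have b3 : (32 * M * G ^ 3 : ℤ) < p := by exact_mod_cast hMG
        have b4 : (0 : ℤ) ≤ M * G ^ 3 := by positivity
        have : (n : ℤ) < p := by rw [hn, Int.natCast_natAbs]; linarith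
        exact_mod_cast this
      have hI : (intDivs n).card ≤ 2 * Δ := (card_intDivs_le n).trans
        (Nat.mul_le_mul_left _ (hΔ n (Int.natAbs_ne_zero.2 (hDne y hy)) hnp))
      calc (Q.filter fun x => v x.1 - v x.2 = v y.1 - v y.2).card
          ≤ (intDivs n ×ˢ (intDivs n ×ˢ (intDivs n ×ˢ intDivs n))).card := by
            refine Finset.card_le_card_of_injOn (fun x => ((x.1.1 : ℤ),
              ((x.1.2.1 : ℤ) - x.1.2.2, ((x.1.2.1 : ℤ) + x.1.2.2 - (x.2.2.1 + x.2.2.2),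
              (x.1.2.1 : ℤ) + x.1.2.2 + (x.2.2.1 + x.2.2.2))))) ?_ ?_
            · intro x hx
              obtain ⟨hxQ, hxy⟩ := Finset.mem_filter.1 hx
              have hDx := hD x hxQ hxy
              have hy0 := hDne y hy
              simp only [Finset.mem_coe, Finset.mem_product, hn]
              refine ⟨?_, ?_, ?_, ?_⟩ <;> refine mem_intDivs hy0 ?_ <;> rw [← hDx, prodD]
              · exact (dvd_mul_right _ _).mul_right _
              · exact (dvd_mul_left _ _).mul_right _
              · exact (dvd_mul_right _ _).mul_left _
              · exact (dvd_mul_left _ _).mul_left _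
            · rintro ⟨⟨m, g, g'⟩, ⟨m', k, k'⟩⟩ hx ⟨⟨n, i, i'⟩, ⟨n', j, j'⟩⟩ hx' h
              obtain ⟨-, ⟨h3, h4⟩, -⟩ := hQmem _ (Finset.mem_filter.1 hx).1
              obtain ⟨-, ⟨h3', h4'⟩, -⟩ := hQmem _ (Finset.mem_filter.1 hx').1
              simp only [Prod.mk.injEq] at h h3 h4 h3' h4' ⊢
              omega
        _ ≤ (2 * Δ) * ((2 * Δ) * ((2 * Δ) * (2 * Δ))) := by
            simp only [Finset.card_product]
            gcongr
        _ = 16 * Δ ^ 4 := by ring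
    refine (Finset.card_le_mul_card_image Q _ hfib).trans (Nat.mul_le_mul_left _ ?_)
    have h1 : Q.image (fun x => v x.1 - v x.2) ⊆ Finset.Icc (-(2 * W : ℤ)) (2 * W) := by
      intro b hb
      obtain ⟨x, hx, rfl⟩ := Finset.mem_image.1 hb
      obtain ⟨⟨h1, h2⟩, -⟩ := hQmem _ hx
      have e1 := hv _ h1
      have e2 := hv _ h2
      rw [Finset.mem_Icc]; omega
    refine (Finset.card_le_card h1).trans ?_
    rw [Int.card_Icc]; omega
  have := card_le_image_add_pairs O π
  rw [← hQ] at this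
  omega

/-! ### Coincidences among the quotients `(l - F g) / m` -/

/-- Cauchy–Schwarz: a map with few coinciding pairs has a large image. -/
lemma sq_card_le_image_mul_pairs {α β : Type*} [DecidableEq β] (O : Finset α) (π : α → β) :
    O.card ^ 2 ≤ (O.image π).card * ((O ×ˢ O).filter fun x => π x.1 = π x.2).card := by
  classical
  have h1 : ((O ×ˢ O).filter fun x => π x.1 = π x.2).card
      = ∑ b ∈ O.image π, (O.filter fun o => π o = b).card ^ 2 := by
    rw [Finset.card_eq_sum_card_fiberwise (f := fun x => π x.1) (t := O.image π)]
    · refine Finset.sum_congr rfl fun b _ => ?_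
      rw [sq, ← Finset.card_product]
      congr 1
      ext x
      simp only [Finset.mem_filter, Finset.mem_product]
      constructor
      · rintro ⟨⟨⟨h1, h2⟩, h3⟩, h4⟩
        exact ⟨⟨h1, h4⟩, h2, h3.symm.trans h4⟩
      · rintro ⟨⟨h1, h4⟩, h2, h3⟩
        exact ⟨⟨⟨h1, h2⟩, h4.trans h3.symm⟩, h4⟩
    · intro x hx
      exact Finset.mem_coe.2 (Finset.mem_image_of_mem _
        (Finset.mem_product.1 (Finset.mem_filter.1 hx).1).1)
  rw [h1, Finset.card_eq_sum_card_image π O]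
  exact sq_sum_le_card_mul_sum_sq

/-- Two solutions satisfy `m' (x - y) = m (x' - y')` as integers, so their first coordinates agree
modulo `m / gcd m m'` and determine the second ones. -/
lemma card_linear_pairs_le {p : ℕ} (M T m m' : ℕ) (hm : M < m ∧ m ≤ 2 * M)
    (hm' : M < m' ∧ m' ≤ 2 * M) (hp : 4 * M ^ 2 * T < p) (k : ZMod p) :
    ((Finset.range (M * T) ×ˢ Finset.range (M * T)).filter fun x : ℕ × ℕ =>
      (m' : ZMod p) * x.1 - m * x.2 = k).card ≤ T * Nat.gcd m m' + 1 := by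
  classical
  set Q := (Finset.range (M * T) ×ˢ Finset.range (M * T)).filter fun x : ℕ × ℕ =>
      (m' : ZMod p) * x.1 - m * x.2 = k with hQ
  have hQmem : ∀ x ∈ Q, (x.1 < M * T ∧ x.2 < M * T) ∧ (m' : ZMod p) * x.1 - m * x.2 = k := by
    intro x hx
    simpa [hQ] using hx
  obtain ⟨N, hN⟩ : ∃ N : ℕ, N = M * T := ⟨_, rfl⟩
  have hNz : (N : ℤ) = M * T := by rw [hN]; push_cast; rfl
  have key : ∀ x ∈ Q, ∀ y ∈ Q, (m' : ℤ) * ((x.1 : ℤ) - y.1) = m * ((x.2 : ℤ) - y.2) := by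
    intro x hx y hy
    obtain ⟨⟨h1, h2⟩, h3⟩ := hQmem x hx
    obtain ⟨⟨h4, h5⟩, h6⟩ := hQmem y hy
    have e : (((m' : ℤ) * ((x.1 : ℤ) - y.1) : ℤ) : ZMod p)
        = ((m * ((x.2 : ℤ) - y.2) : ℤ) : ZMod p) := by
      push_cast
      linear_combination h3 - h6
    refine intCast_inj_of_small e ?_
    have b1 : |(x.1 : ℤ) - y.1| ≤ M * T := by rw [← hNz, abs_le]; omega
    have b2 : |(x.2 : ℤ) - y.2| ≤ M * T := by rw [← hNz, abs_le]; omega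
    have b3 : |(m : ℤ)| ≤ 2 * M := by rw [abs_le]; omega
    have b4 : |(m' : ℤ)| ≤ 2 * M := by rw [abs_le]; omega
    calc |(m' : ℤ) * ((x.1 : ℤ) - y.1) - m * ((x.2 : ℤ) - y.2)|
        ≤ |(m' : ℤ)| * |(x.1 : ℤ) - y.1| + |(m : ℤ)| * |(x.2 : ℤ) - y.2| := by
          rw [← abs_mul, ← abs_mul]; exact abs_sub _ _
      _ ≤ (2 * M) * (M * T) + (2 * M) * (M * T) := by gcongr
      _ = 4 * M ^ 2 * T := by ring
      _ < p := by exact_mod_cast hp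
  have hg : 0 < Nat.gcd m m' := Nat.gcd_pos_of_pos_left _ (by omega)
  have hd1 : m / Nat.gcd m m' * Nat.gcd m m' = m := Nat.div_mul_cancel (Nat.gcd_dvd_left _ _)
  have hd2 : m' / Nat.gcd m m' * Nat.gcd m m' = m' := Nat.div_mul_cancel (Nat.gcd_dvd_right _ _)
  have hcop : Nat.Coprime (m / Nat.gcd m m') (m' / Nat.gcd m m') := Nat.coprime_div_gcd_div_gcd hg
  have hinj : Q.card = (Q.image Prod.fst).card := by
    refine (Finset.card_image_of_injOn ?_).symm
    intro x hx y hy hxy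
    have h1 := key x hx y hy
    rw [hxy, sub_self, mul_zero] at h1
    rcases mul_eq_zero.1 h1.symm with h2 | h2
    · omega
    · exact Prod.ext hxy (by omega)
  have h2 : (Q.image Prod.fst).card ≤ M * T / (m / Nat.gcd m m') + 1 := by
    refine card_le_of_modEq _ _ _ ?_ ?_
    · intro l hl
      obtain ⟨x, hx, rfl⟩ := Finset.mem_image.1 hl
      exact (hQmem x hx).1.1
    · intro l hl l' hl'
      obtain ⟨x, hx, rfl⟩ := Finset.mem_image.1 hl
      obtain ⟨y, hy, rfl⟩ := Finset.mem_image.1 hl'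
      have h1 := key x hx y hy
      have h3 : ((m / Nat.gcd m m' : ℕ) : ℤ) ∣
          ((m' / Nat.gcd m m' : ℕ) : ℤ) * ((x.1 : ℤ) - y.1) := by
        refine ⟨(x.2 : ℤ) - y.2, ?_⟩
        have hg' : ((Nat.gcd m m' : ℕ) : ℤ) ≠ 0 := by exact_mod_cast hg.ne'
        refine mul_left_cancel₀ hg' ?_
        have e1 : ((m / Nat.gcd m m' : ℕ) : ℤ) * (Nat.gcd m m' : ℕ) = m := by exact_mod_cast hd1
        have e2 : ((m' / Nat.gcd m m' : ℕ) : ℤ) * (Nat.gcd m m' : ℕ) = m' := by exact_mod_cast hd2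
        calc _ = (((m' / Nat.gcd m m' : ℕ) : ℤ) * (Nat.gcd m m' : ℕ)) * ((x.1 : ℤ) - y.1) := by ring
          _ = (((m / Nat.gcd m m' : ℕ) : ℤ) * (Nat.gcd m m' : ℕ)) * ((x.2 : ℤ) - y.2) := by
            rw [e1, e2, h1]
          _ = _ := by ring
      exact (Nat.isCoprime_iff_coprime.2 hcop).dvd_of_dvd_mul_left h3
  rw [hinj]
  refine h2.trans (Nat.add_le_add_right (Nat.div_le_of_le_mul ?_) 1)
  calc M * T ≤ m * T := Nat.mul_le_mul_right _ hm.1.le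
    _ = (m / Nat.gcd m m' * Nat.gcd m m') * T := by rw [hd1]
    _ = _ := by ring

/-- The gcd-weighted sum of the counts over pairs `(m, m')` is controlled by its diagonal terms,
by counting common windows and using `2 x y ≤ x ^ 2 + y ^ 2`. -/
lemma sum_gcd_nearCount_le {p : ℕ} [NeZero p] (M W Δ : ℕ) (hW : W < p)
    (hMp : 2 * M < p) (hΔ : ∀ n : ℕ, n ≠ 0 → n < p → n.divisors.card ≤ Δ)
    (s : Finset ℕ) (φ : ℕ → ℕ → ZMod p) :
    ∑ m ∈ Finset.Ioc M (2 * M), ∑ m' ∈ Finset.Ioc M (2 * M),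
      Nat.gcd m m' * nearCount W s (φ m') (φ m)
      ≤ 4 * M * Δ * ∑ m ∈ Finset.Ioc M (2 * M), nearCount (2 * W) s (φ m) (φ m) := by
  classical
  set R := Finset.Ioc M (2 * M) with hR
  set A : ℕ → ZMod p → ℕ := fun m y => windowCount W s (φ m) y with hA
  have h1 : (W + 1) * ∑ m ∈ R, ∑ m' ∈ R, Nat.gcd m m' * nearCount W s (φ m') (φ m)
      ≤ ∑ m ∈ R, ∑ m' ∈ R, Nat.gcd m m' * ∑ y, A m' y * A m y := by
    rw [Finset.mul_sum]
    refine Finset.sum_le_sum fun m _ => ?_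
    rw [Finset.mul_sum]
    refine Finset.sum_le_sum fun m' _ => ?_
    calc _ = Nat.gcd m m' * ((W + 1) * nearCount W s (φ m') (φ m)) := by ring
      _ ≤ _ := Nat.mul_le_mul_left _ (mul_nearCount_le W hW s _ _)
  have h2 : 2 * ∑ m ∈ R, ∑ m' ∈ R, Nat.gcd m m' * ∑ y, A m' y * A m y
      ≤ 2 * ∑ m ∈ R, (∑ m' ∈ R, Nat.gcd m m') * ∑ y, A m y * A m y := by
    have h3 : ∑ m ∈ R, ∑ m' ∈ R, Nat.gcd m m' * ∑ y, A m' y * A m' y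
        = ∑ m ∈ R, (∑ m' ∈ R, Nat.gcd m m') * ∑ y, A m y * A m y := by
      rw [Finset.sum_comm]
      refine Finset.sum_congr rfl fun m _ => ?_
      rw [Finset.sum_mul]
      refine Finset.sum_congr rfl fun m' _ => ?_
      rw [Nat.gcd_comm]
    have h4 : ∑ m ∈ R, ∑ m' ∈ R, Nat.gcd m m' * ∑ y, A m y * A m y
        = ∑ m ∈ R, (∑ m' ∈ R, Nat.gcd m m') * ∑ y, A m y * A m y := by
      refine Finset.sum_congr rfl fun m _ => ?_
      rw [Finset.sum_mul]
    rw [two_mul (∑ m ∈ R, (∑ m' ∈ R, Nat.gcd m m') * ∑ y, A m y * A m y)]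
    nth_rewrite 1 [← h3]
    rw [← h4, ← Finset.sum_add_distrib, Finset.mul_sum]
    refine Finset.sum_le_sum fun m _ => ?_
    rw [← Finset.sum_add_distrib, Finset.mul_sum]
    refine Finset.sum_le_sum fun m' _ => ?_
    rw [← mul_add, mul_left_comm, ← Finset.sum_add_distrib, Finset.mul_sum]
    refine Nat.mul_le_mul_left _ (Finset.sum_le_sum fun y _ => ?_)
    have := two_mul_le_add_sq (A m' y) (A m y)
    nlinarith
  have h5 : ∑ m ∈ R, (∑ m' ∈ R, Nat.gcd m m') * ∑ y, A m y * A m y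
      ≤ ∑ m ∈ R, (2 * M * Δ) * ((2 * W + 1) * nearCount (2 * W) s (φ m) (φ m)) := by
    refine Finset.sum_le_sum fun m hm => ?_
    obtain ⟨hm1, hm2⟩ := Finset.mem_Ioc.1 hm
    exact Nat.mul_le_mul (sum_gcd_le M m Δ (by omega) (hΔ m (by omega) (by omega)))
      (sum_windowCount_sq_le W s (φ m))
  have h6 : ∑ m ∈ R, (2 * M * Δ) * ((2 * W + 1) * nearCount (2 * W) s (φ m) (φ m))
      ≤ (W + 1) * (4 * M * Δ * ∑ m ∈ R, nearCount (2 * W) s (φ m) (φ m)) := by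
    rw [← Finset.mul_sum, ← Finset.mul_sum]
    have : 2 * W + 1 ≤ 2 * (W + 1) := by omega
    calc _ ≤ 2 * M * Δ * ((2 * (W + 1)) * ∑ m ∈ R, nearCount (2 * W) s (φ m) (φ m)) := by gcongr
      _ = _ := by ring
  refine Nat.le_of_mul_le_mul_left (c := W + 1) ?_ (Nat.succ_pos W)
  exact h1.trans ((Nat.le_of_mul_le_mul_left h2 two_pos).trans (h5.trans h6))

/-- The quotients `(l - F g) / m` in `ZMod p`, for `F = cubicVal a c`, `M < m ≤ 2 M`,
`1 ≤ g ≤ 3 M T` and `0 ≤ l < M T`. -/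
def quotSet (p : ℕ) [Fact p.Prime] (a c : ZMod p) (M T : ℕ) : Finset (ZMod p) :=
  (Finset.Ioc M (2 * M) ×ˢ (Finset.Icc 1 (3 * M * T) ×ˢ Finset.range (M * T))).image
    fun o => ((o.2.2 : ZMod p) - cubicVal a c o.2.1) / o.1

/-- The quotients `(l - F g) / m` are nearly all distinct. The equation
`(l - F g) / m = (l' - F g') / m'` forces `m' F g - m F g' = m' l - m l'` to be a residue of absolute
value at most `W = 2 M ^ 2 T`, which `sum_gcd_nearCount_le` and `sum_nearCount_le` count; the
conclusion follows by Cauchy–Schwarz. -/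
lemma card_quotSet_ge {p : ℕ} [Fact p.Prime] (hp3 : 3 < p) (a c : ZMod p) (ha : a ≠ 0)
    (M T Δ : ℕ) (hM : 1 ≤ M) (hT : 1 ≤ T) (hMT : 1000 * M ^ 4 * T ^ 3 < p)
    (hΔ1 : 1 ≤ Δ) (hΔ : ∀ n : ℕ, n ≠ 0 → n < p → n.divisors.card ≤ Δ) :
    3 * M ^ 3 * T ^ 2 ≤ 800 * Δ ^ 5 * (quotSet p a c M T).card := by
  classical
  set R := Finset.Ioc M (2 * M) with hR
  set s := Finset.Icc 1 (3 * M * T) with hs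
  set L := Finset.range (M * T) with hL
  set W := 2 * M ^ 2 * T with hW
  set O := R ×ˢ (s ×ˢ L) with hO
  set π : ℕ × ℕ × ℕ → ZMod p := fun o => ((o.2.2 : ZMod p) - cubicVal a c o.2.1) / o.1 with hπ
  set φ : ℕ → ℕ → ZMod p := fun m g => (m : ZMod p) * cubicVal a c g with hφ
  have hMT1 : 1 ≤ M ^ 2 * T := Nat.mul_pos (by positivity) (by omega)
  have hMTp : 1000 * (M ^ 2 * T) < p := by
    refine lt_of_le_of_lt ?_ hMT
    have h1 : 1 ≤ M ^ 2 * T ^ 2 := Nat.mul_pos (by positivity) (by positivity)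
    calc 1000 * (M ^ 2 * T) = 1000 * (M ^ 2 * T) * 1 := by ring
      _ ≤ 1000 * (M ^ 2 * T) * (M ^ 2 * T ^ 2) := by gcongr
      _ = _ := by ring
  have hM2 : M ≤ M ^ 2 * T := by nlinarith [Nat.mul_le_mul hM hT]
  have hcardO : O.card = 3 * M ^ 3 * T ^ 2 := by
    simp only [hO, hR, hs, hL, Finset.card_product, Nat.card_Ioc, Nat.card_Icc, Finset.card_range]
    have : 2 * M - M = M := by omega
    rw [this, Nat.add_sub_cancel]; ring
  have hmne : ∀ m ∈ R, (m : ZMod p) ≠ 0 := by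
    intro m hm
    obtain ⟨h1, h2⟩ := Finset.mem_Ioc.1 hm
    rw [Ne, ZMod.natCast_eq_zero_iff]
    exact Nat.not_dvd_of_pos_of_lt (by omega) (by omega)
  -- coinciding pairs, sorted by `(m, m')` and then by `(g, g')`
  have hE : ((O ×ˢ O).filter fun x => π x.1 = π x.2).card
      ≤ ∑ m ∈ R, ∑ m' ∈ R, nearCount W s (φ m') (φ m) * (T * Nat.gcd m m' + 1) := by
    set E := (O ×ˢ O).filter fun x => π x.1 = π x.2 with hE
    have hEmem : ∀ x ∈ E, (x.1.1 ∈ R ∧ x.1.2.1 ∈ s ∧ x.1.2.2 ∈ L) ∧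
        (x.2.1 ∈ R ∧ x.2.2.1 ∈ s ∧ x.2.2.2 ∈ L) ∧
        φ x.2.1 x.1.2.1 - φ x.1.1 x.2.2.1 = (x.2.1 : ZMod p) * x.1.2.2 - x.1.1 * x.2.2.2 := by
      intro x hx
      obtain ⟨h1, h2⟩ := Finset.mem_filter.1 hx
      simp only [hO, Finset.mem_product] at h1
      refine ⟨h1.1, h1.2, ?_⟩
      simp only [hπ] at h2
      rw [div_eq_div_iff (hmne _ h1.1.1) (hmne _ h1.2.1)] at h2
      simp only [hφ]
      linear_combination -h2
    rw [← Finset.sum_product' (f := fun m m' =>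
      nearCount W s (φ m') (φ m) * (T * Nat.gcd m m' + 1)),
      Finset.card_eq_sum_card_fiberwise (f := fun x => (x.1.1, x.2.1)) (t := R ×ˢ R)]
    swap
    · intro x hx
      have := hEmem x hx
      exact Finset.mem_coe.2 (Finset.mem_product.2 ⟨this.1.1, this.2.1.1⟩)
    refine Finset.sum_le_sum ?_
    rintro ⟨m, m'⟩ hmm
    obtain ⟨hm, hm'⟩ := Finset.mem_product.1 hmm
    have bm := Finset.mem_Ioc.1 hm
    have bm' := Finset.mem_Ioc.1 hm'
    simp only at bm bm'
    rw [nearCount, mul_comm]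
    refine Finset.card_le_mul_card_image_of_maps_to (f := fun x => (x.1.2.1, x.2.2.1)) ?_ _ ?_
    · intro x hx
      obtain ⟨hx1, hx2⟩ := Finset.mem_filter.1 hx
      obtain ⟨h1, h2, h3⟩ := hEmem x hx1
      simp only [Prod.mk.injEq] at hx2
      rw [hx2.1, hx2.2] at h3
      rw [Finset.mem_filter, Finset.mem_product]
      refine ⟨⟨h1.2.1, h2.2.1⟩, ?_⟩
      simp only
      rw [h3, mem_smallRes]
      have l1 := Finset.mem_range.1 h1.2.2
      have l2 := Finset.mem_range.1 h2.2.2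
      have u1 : m' * x.1.2.2 ≤ W := by
        calc m' * x.1.2.2 ≤ (2 * M) * (M * T) := Nat.mul_le_mul bm'.2 l1.le
          _ = W := by rw [hW]; ring
      have u2 : m * x.2.2.2 ≤ W := by
        calc m * x.2.2.2 ≤ (2 * M) * (M * T) := Nat.mul_le_mul bm.2 l2.le
          _ = W := by rw [hW]; ring
      refine ⟨((m' * x.1.2.2 : ℕ) : ℤ) - ((m * x.2.2.2 : ℕ) : ℤ), by omega, by omega, ?_⟩
      push_cast
      rfl
    · rintro ⟨g, g'⟩ -
      refine le_trans (Finset.card_le_card_of_injOn (fun x => (x.1.2.2, x.2.2.2)) ?_ ?_)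
        (card_linear_pairs_le M T m m' bm bm' (by nlinarith) (φ m' g - φ m g'))
      · intro x hx
        obtain ⟨hx', hx3⟩ := Finset.mem_filter.1 hx
        obtain ⟨hx1, hx2⟩ := Finset.mem_filter.1 hx'
        obtain ⟨h1, h2, h3⟩ := hEmem x hx1
        simp only [Prod.mk.injEq] at hx2 hx3
        rw [hx2.1, hx2.2, hx3.1, hx3.2] at h3
        rw [Finset.mem_coe, Finset.mem_filter, Finset.mem_product]
        exact ⟨⟨h1.2.2, h2.2.2⟩, h3.symm⟩
      · rintro ⟨⟨n, k, l⟩, ⟨n', k', l'⟩⟩ hx ⟨⟨i, j, e⟩, ⟨i', j', e'⟩⟩ hy h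
        obtain ⟨hx', hx3⟩ := Finset.mem_filter.1 hx
        have hx2 := (Finset.mem_filter.1 hx').2
        obtain ⟨hy', hy3⟩ := Finset.mem_filter.1 hy
        have hy2 := (Finset.mem_filter.1 hy').2
        simp only [Prod.mk.injEq] at hx2 hx3 hy2 hy3 h ⊢
        omega
  have hE2 : ∑ m ∈ R, ∑ m' ∈ R, nearCount W s (φ m') (φ m) * (T * Nat.gcd m m' + 1)
      ≤ 2 * T * ∑ m ∈ R, ∑ m' ∈ R, Nat.gcd m m' * nearCount W s (φ m') (φ m) := by
    rw [Finset.mul_sum]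
    refine Finset.sum_le_sum fun m hm => ?_
    rw [Finset.mul_sum]
    refine Finset.sum_le_sum fun m' _ => ?_
    have hm0 := (Finset.mem_Ioc.1 hm).1
    have hg : 1 ≤ Nat.gcd m m' := Nat.gcd_pos_of_pos_left _ (by omega)
    have : T * Nat.gcd m m' + 1 ≤ 2 * T * Nat.gcd m m' := by nlinarith [Nat.mul_le_mul hT hg]
    calc _ ≤ nearCount W s (φ m') (φ m) * (2 * T * Nat.gcd m m') := Nat.mul_le_mul_left _ this
      _ = _ := by ring
  have hS : ∑ m ∈ R, nearCount (2 * W) s (φ m) (φ m) ≤ 300 * (M ^ 2 * T) * Δ ^ 4 := by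
    have h1 := sum_nearCount_le hp3 a c ha M (3 * M * T) (2 * W) Δ ?_ hΔ
    · refine h1.trans ?_
      have hD : 1 ≤ Δ ^ 4 := Nat.one_le_pow _ _ hΔ1
      calc M * (3 * M * T) + M * (2 * (3 * M * T) + 1) + 16 * Δ ^ 4 * (4 * (2 * W) + 1)
          = (9 * (M ^ 2 * T) + M) * 1 + 16 * Δ ^ 4 * (16 * (M ^ 2 * T) + 1) := by
            rw [hW]; ring
        _ ≤ (9 * (M ^ 2 * T) + M ^ 2 * T) * Δ ^ 4
            + 16 * Δ ^ 4 * (16 * (M ^ 2 * T) + M ^ 2 * T) := by gcongr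
        _ = 282 * (M ^ 2 * T) * Δ ^ 4 := by ring
        _ ≤ _ := by gcongr; norm_num
    · refine lt_of_le_of_lt ?_ hMT
      calc 32 * M * (3 * M * T) ^ 3 = 864 * (M ^ 4 * T ^ 3) := by ring
        _ ≤ 1000 * (M ^ 4 * T ^ 3) := by gcongr; norm_num
        _ = _ := by ring
  have hX := sum_gcd_nearCount_le M W Δ (by rw [hW]; nlinarith) (by omega) hΔ s φ
  have hEfin : ((O ×ˢ O).filter fun x => π x.1 = π x.2).card ≤ 2400 * M ^ 3 * T ^ 2 * Δ ^ 5 := by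
    refine hE.trans (hE2.trans ?_)
    calc _ ≤ 2 * T * (4 * M * Δ * (300 * (M ^ 2 * T) * Δ ^ 4)) := by
          refine Nat.mul_le_mul_left _ (hX.trans ?_)
          exact Nat.mul_le_mul_left _ hS
      _ = _ := by ring
  have hC := sq_card_le_image_mul_pairs O π
  rw [hcardO] at hC
  have hpos : 0 < 3 * M ^ 3 * T ^ 2 := by positivity
  refine Nat.le_of_mul_le_mul_left (c := 3 * M ^ 3 * T ^ 2) ?_ hpos
  calc 3 * M ^ 3 * T ^ 2 * (3 * M ^ 3 * T ^ 2) = (3 * M ^ 3 * T ^ 2) ^ 2 := by ring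
    _ ≤ (O.image π).card * (2400 * M ^ 3 * T ^ 2 * Δ ^ 5) :=
        hC.trans (Nat.mul_le_mul_left _ hEfin)
    _ = 3 * M ^ 3 * T ^ 2 * (800 * Δ ^ 5 * (O.image π).card) := by ring

/-! ### Symmetric pairs of points on the curve -/

/-- Two points of the curve symmetric about a suitable `X` lie in a common box of side `H` as
soon as `3 a g (l - F g)` is a square: with `X ^ 2 = (l - F g) / (3 a g)` the points with
abscissas `X - g` and `X + g` differ by `(2 g, 2 l)`. -/
lemma quadraticChar_eq_neg_one {p : ℕ} [Fact p.Prime] (hp3 : 3 < p) (a c : ℤ)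
    (ha : (a : ZMod p) ≠ 0) (H : ℕ) (hH : H ≤ p)
    (hno : ∀ X Y : ℤ, 0 ≤ X → X ≤ (p : ℤ) - 1 → 0 ≤ Y → Y ≤ (p : ℤ) - 1 →
      ¬ 2 ≤ (cubicPoints p a c ∩ box p X Y H).ncard)
    (g l : ℕ) (hg : 1 ≤ g) (hgH : 2 * g + 1 ≤ H) (hlH : 2 * l + 1 ≤ H) :
    quadraticChar (ZMod p) (3 * a * g * (l - cubicVal (a : ZMod p) c g)) = -1 := by
  rw [quadraticChar_neg_one_iff_not_isSquare]
  rintro ⟨s, hs⟩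
  have natne : ∀ n : ℕ, 0 < n → n < p → (n : ZMod p) ≠ 0 := fun n h1 h2 => by
    rw [Ne, ZMod.natCast_eq_zero_iff]
    exact Nat.not_dvd_of_pos_of_lt h1 h2
  have h3 : (3 : ZMod p) ≠ 0 := by exact_mod_cast natne 3 (by norm_num) hp3
  have hg0 : (g : ZMod p) ≠ 0 := natne g hg (by omega)
  have h2g : ((2 * g : ℕ) : ZMod p) ≠ 0 := natne _ (by omega) (by omega)
  have hA : (3 : ZMod p) * a * g ≠ 0 := mul_ne_zero (mul_ne_zero h3 ha) hg0
  set x := s / (3 * a * g) with hx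
  have hx2 : (3 : ZMod p) * a * g * x ^ 2 = l - cubicVal (a : ZMod p) c g := by
    rw [hx]
    refine mul_left_cancel₀ hA ?_
    rw [hs]
    field_simp
  set f : ZMod p → ZMod p := fun z => a * z ^ 3 + c * z with hf
  have hdiff : f (x + g) - f (x - g) = 2 * l := by
    simp only [cubicVal] at hx2
    simp only [hf]
    linear_combination 2 * hx2
  have hval : ∀ z : ZMod p, (((z.val : ℕ) : ℤ) : ZMod p) = z := fun z => by simp
  have hvlt : ∀ z : ZMod p, ((z.val : ℕ) : ℤ) ≤ (p : ℤ) - 1 := fun z => by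
    have := ZMod.val_lt z
    omega
  have hmem : ∀ z : ZMod p, ((z.val : ℤ), ((f z).val : ℤ)) ∈ cubicPoints p a c := by
    intro z
    refine ⟨by positivity, hvlt z, by positivity, hvlt _, ?_⟩
    rw [← ZMod.intCast_eq_intCast_iff]
    push_cast
    simp [hf]
  refine hno ((x - g - 1).val : ℤ) ((f (x - g) - 1).val : ℤ) (by positivity) (hvlt _)
    (by positivity) (hvlt _) ?_
  have hne : ((((x - g).val : ℤ), ((f (x - g)).val : ℤ)) : ℤ × ℤ)
      ≠ (((x + g).val : ℤ), ((f (x + g)).val : ℤ)) := by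
    intro h
    have h1 := congrArg (fun n : ℤ => (n : ZMod p)) (Prod.ext_iff.1 h).1
    simp only [hval] at h1
    apply h2g
    push_cast
    linear_combination -h1
  rw [← Set.ncard_pair hne]
  refine Set.ncard_le_ncard ?_ ?_
  · rintro q (rfl | rfl)
    · refine ⟨hmem _, ⟨1, le_rfl, by omega, ?_⟩, ⟨1, le_rfl, by omega, ?_⟩⟩
      · rw [← ZMod.intCast_eq_intCast_iff, Int.cast_add, hval, hval]
        push_cast; ring
      · rw [← ZMod.intCast_eq_intCast_iff, Int.cast_add, hval, hval]
        push_cast; ring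
    · refine ⟨hmem _, ⟨2 * g + 1, by omega, by omega, ?_⟩, ⟨2 * l + 1, by omega, by omega, ?_⟩⟩
      · rw [← ZMod.intCast_eq_intCast_iff, Int.cast_add, hval, hval]
        push_cast; ring
      · rw [← ZMod.intCast_eq_intCast_iff, Int.cast_add, hval, hval]
        push_cast
        linear_combination hdiff
  · refine ((Set.finite_Icc (0 : ℤ) (p - 1)).prod (Set.finite_Icc (0 : ℤ) (p - 1))).subset ?_
    rintro q ⟨⟨h1, h2, h3, h4, -⟩, -⟩
    exact ⟨⟨h1, h2⟩, ⟨h3, h4⟩⟩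

/-- If no box of side `H` contains two points of the curve, then the quadratic character is
constant on `z + 1, …, z + T` for every `z` in `quotSet`, so `card_run_le`, applied to the two
signs, bounds the cardinality of `quotSet`. -/
lemma card_quotSet_le {p : ℕ} [Fact p.Prime] (hp3 : 3 < p) (a c : ℤ)
    (ha : (a : ZMod p) ≠ 0) (H M T r : ℕ) (hH : H ≤ p) (hMTH : 6 * M * T + 1 ≤ H)
    (hno : ∀ X Y : ℤ, 0 ≤ X → X ≤ (p : ℤ) - 1 → 0 ≤ Y → Y ≤ (p : ℤ) - 1 →
      ¬ 2 ≤ (cubicPoints p a c ∩ box p X Y H).ncard)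
    (hM : 2 * M < p) (hT : T < p) (hp64 : 64 ≤ p) (hpr : 4 * (2 * r + 1) ≤ p) :
    ((quotSet p (a : ZMod p) c M T).card : ℝ) * (T.choose r : ℝ) ^ 2
      ≤ 2 * (T.choose r * p + (T.choose r : ℝ) ^ 2 * (71 * r * √p)) := by
  classical
  set S : ℤ → Finset (ZMod p) := fun σ => Finset.univ.filter fun z =>
    ∀ t ∈ Finset.Icc 1 T, quadraticChar (ZMod p) (z + (t : ℕ)) = σ with hS
  have hSmem : ∀ (σ : ℤ) (z : ZMod p), z ∈ S σ ↔
      ∀ t ∈ Finset.Icc 1 T, quadraticChar (ZMod p) (z + (t : ℕ)) = σ := fun σ z => by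
    simp only [hS, Finset.mem_filter_univ]
  have hSle : ∀ σ : ℤ, σ ^ 2 = 1 → ((S σ).card : ℝ) * (T.choose r : ℝ) ^ 2
      ≤ T.choose r * p + (T.choose r : ℝ) ^ 2 * (71 * r * √p) := fun σ hσ =>
    card_run_le r T hT hp64 hpr σ hσ (S σ) fun z hz => (hSmem σ z).1 hz
  have hsub : quotSet p (a : ZMod p) c M T ⊆ S 1 ∪ S (-1) := by
    intro z hz
    obtain ⟨⟨m, g, l⟩, ho, rfl⟩ := Finset.mem_image.1 hz
    simp only [Finset.mem_product, Finset.mem_Ioc, Finset.mem_Icc, Finset.mem_range] at ho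
    obtain ⟨⟨hm1, hm2⟩, ⟨hg1, hg2⟩, hl⟩ := ho
    have natne : ∀ n : ℕ, 0 < n → n < p → (n : ZMod p) ≠ 0 := fun n h1 h2 => by
      rw [Ne, ZMod.natCast_eq_zero_iff]
      exact Nat.not_dvd_of_pos_of_lt h1 h2
    have h3 : (3 : ZMod p) ≠ 0 := by exact_mod_cast natne 3 (by norm_num) hp3
    obtain ⟨N, hN⟩ : ∃ N, N = M * T := ⟨_, rfl⟩
    rw [mul_assoc, ← hN] at hMTH hg2
    rw [← hN] at hl
    have hg0 : (g : ZMod p) ≠ 0 := natne g hg1 (by omega)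
    have hm0 : (m : ZMod p) ≠ 0 := natne m (by omega) (by omega)
    have hB : (3 : ZMod p) * a * g * m ≠ 0 :=
      mul_ne_zero (mul_ne_zero (mul_ne_zero h3 ha) hg0) hm0
    have hsq := quadraticChar_sq_one hB
    have hrun : ∀ t ∈ Finset.Icc 1 T, quadraticChar (ZMod p)
        (((l : ZMod p) - cubicVal (a : ZMod p) c g) / m + (t : ℕ))
          = - quadraticChar (ZMod p) (3 * a * g * m) := by
      intro t ht
      have ht2 := (Finset.mem_Icc.1 ht).2
      have hmt : m * t ≤ 2 * N := by
        calc m * t ≤ (2 * M) * T := Nat.mul_le_mul hm2 ht2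
          _ = 2 * N := by rw [hN]; ring
      have h1 := quadraticChar_eq_neg_one hp3 a c ha H hH hno g (l + m * t) hg1 (by omega)
        (by omega)
      have h2 : (3 : ZMod p) * a * g * (((l + m * t : ℕ) : ZMod p) - cubicVal (a : ZMod p) c g)
          = (3 * a * g * m) *
            (((l : ZMod p) - cubicVal (a : ZMod p) c g) / m + (t : ℕ)) := by
        push_cast
        field_simp
        ring
      rw [h2, map_mul] at h1
      set u := quadraticChar (ZMod p) (3 * a * g * m)
      set v := quadraticChar (ZMod p) (((l : ZMod p) - cubicVal (a : ZMod p) c g) / m + (t : ℕ))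
      linear_combination u * h1 - v * hsq
    rw [Finset.mem_union, hSmem, hSmem]
    rcases quadraticChar_dichotomy hB with h | h
    · exact Or.inr fun t ht => by rw [hrun t ht, h]
    · exact Or.inl fun t ht => by rw [hrun t ht, h, neg_neg]
  have hcard : ((quotSet p (a : ZMod p) c M T).card : ℝ) ≤ (S 1).card + (S (-1)).card := by
    exact_mod_cast (Finset.card_le_card hsub).trans (Finset.card_union_le _ _)
  have h1 := hSle 1 (by norm_num)
  have h2 := hSle (-1) (by norm_num)
  have h3 : (0 : ℝ) ≤ (T.choose r : ℝ) ^ 2 := by positivity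
  nlinarith [mul_le_mul_of_nonneg_right hcard h3]

/-! ### Choice of parameters -/

/-- The choice `T = r + ⌈p ^ (1 / (2 r))⌉` makes `T.choose r` as large as a multiple of `√p`. -/
lemma sqrt_le_factorial_mul_choose (r Q : ℕ) (hr : 1 ≤ r) (P : ℝ) (hP : 0 ≤ P)
    (hQ : P ^ ((1 : ℝ) / (2 * r)) ≤ Q) : √P ≤ r.factorial * ((r + Q).choose r : ℝ) := by
  have h1 := Nat.pow_le_choose (α := ℝ) r (r + Q)
  rw [div_le_iff₀ (by positivity)] at h1
  have h2 : ((r + Q + 1 - r : ℕ) : ℝ) = Q + 1 := by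
    rw [show r + Q + 1 - r = Q + 1 by omega]; push_cast; ring
  rw [h2] at h1
  have hr0 : (r : ℝ) ≠ 0 := by positivity
  calc √P = (P ^ ((1 : ℝ) / (2 * r))) ^ r := by
        rw [Real.sqrt_eq_rpow, ← Real.rpow_natCast, ← Real.rpow_mul hP]
        congr 1
        field_simp
    _ ≤ (Q + 1 : ℝ) ^ r := by gcongr; linarith
    _ ≤ _ := by rw [mul_comm]; exact h1

/-- Once `N` is at least of order `√p`, the second-moment bound gives a cardinality of order
`√p`. -/
lemma card_le_sqrt (n N p r f : ℝ) (hp : 0 < p) (hf : 0 < f)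
    (hN : √p ≤ f * N) (h : n * N ^ 2 ≤ 2 * (N * p + N ^ 2 * (71 * r * √p))) :
    n ≤ 2 * (f + 71 * r) * √p := by
  have hs : 0 < √p := Real.sqrt_pos.2 hp
  have hN0 : 0 < N := by
    by_contra hneg
    nlinarith [mul_nonneg hf.le (not_lt.1 hneg |> sub_nonneg.2)]
  have hss : √p * √p = p := Real.mul_self_sqrt hp.le
  have h1 : N * p ≤ N ^ 2 * (f * √p) := by
    calc N * p = (N * √p) * √p := by rw [mul_assoc, hss]
      _ ≤ (N * √p) * (f * N) := by gcongr
      _ = _ := by ring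
  refine le_of_mul_le_mul_right (a := N ^ 2) ?_ (by positivity)
  nlinarith

/-- A set of size `O(√P)` is smaller than `M ^ 3`, which has order at least `P ^ (1/2 + 3ε/2)`, even
after the loss of a power `Δ ^ 5` of the divisor bound. -/
lemma rpow_contradiction {P M T Δ n C K ε : ℝ} (hP : 0 < P) (hΔ0 : 0 ≤ Δ) (hK : 0 < K)
    (hM : P ^ ((1 : ℝ) / 6 + ε / 2) ≤ M) (hT : 1 ≤ T) (hΔ : Δ ≤ C * P ^ (ε / 10))
    (hn : n ≤ K * √P) (hlow : 3 * M ^ 3 * T ^ 2 ≤ 800 * Δ ^ 5 * n)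
    (hbig : 800 * C ^ 5 * K < P ^ ε) : False := by
  have hT2 : 1 ≤ T ^ 2 := one_le_pow₀ hT
  have hM0 : 0 ≤ M := le_trans (by positivity) hM
  have hM3 : 0 ≤ M ^ 3 := by positivity
  have hup : 800 * Δ ^ 5 * n ≤ 800 * (C * P ^ (ε / 10)) ^ 5 * (K * √P) := by
    have h1 : Δ ^ 5 ≤ (C * P ^ (ε / 10)) ^ 5 := by gcongr
    have h2 : 0 ≤ Δ ^ 5 := by positivity
    calc 800 * Δ ^ 5 * n ≤ 800 * Δ ^ 5 * (K * √P) := by gcongr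
      _ ≤ _ := by gcongr
  have hchain : P ^ ε * P ^ ((1 : ℝ) / 2 + ε / 2) ≤
      800 * C ^ 5 * K * P ^ ((1 : ℝ) / 2 + ε / 2) := by
    calc P ^ ε * P ^ ((1 : ℝ) / 2 + ε / 2) = (P ^ ((1 : ℝ) / 6 + ε / 2)) ^ 3 := by
          rw [← Real.rpow_mul_natCast hP.le, ← Real.rpow_add hP]
          congr 1
          push_cast; ring
      _ ≤ M ^ 3 := by gcongr
      _ ≤ 3 * M ^ 3 * T ^ 2 := by nlinarith
      _ ≤ 800 * (C * P ^ (ε / 10)) ^ 5 * (K * √P) := hlow.trans hup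
      _ = 800 * C ^ 5 * K * (P ^ ((1 : ℝ) / 2) * (P ^ (ε / 10)) ^ 5) := by
          rw [Real.sqrt_eq_rpow]; ring
      _ = _ := by
          rw [← Real.rpow_mul_natCast hP.le, ← Real.rpow_add hP]
          congr 3
          push_cast; ring
  exact absurd (le_of_mul_le_mul_right hchain (by positivity)) (not_le.2 hbig)

theorem cubic_two_points_in_small_box :
    ∀ ε : ℝ, 0 < ε → ∃ cε : ℝ, 0 < cε ∧
      ∀ p : ℕ, p.Prime → 3 < p →
        ∀ a : ℤ, IsCoprime a (p : ℤ) →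
          ∀ c : ℤ, ∀ H : ℕ,
            cε * (p : ℝ) ^ ((1 : ℝ) / 6 + ε) ≤ (H : ℝ) → H ≤ p →
            ∃ X Y : ℤ, 0 ≤ X ∧ X ≤ (p : ℤ) - 1 ∧ 0 ≤ Y ∧ Y ≤ (p : ℤ) - 1 ∧
              2 ≤ (cubicPoints p a c ∩ box p X Y H).ncard := by
  intro ε₁ hε₁
  -- a smaller exponent only strengthens the claim, as `p ≥ 1`
  obtain ⟨ε, hε, hεε₁, hε100⟩ : ∃ ε : ℝ, 0 < ε ∧ ε ≤ ε₁ ∧ ε ≤ 1 / 100 :=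
    ⟨min ε₁ (1 / 100), by positivity, min_le_left _ _, min_le_right _ _⟩
  obtain ⟨C, hC1, hC⟩ := exists_card_divisors_le (ε / 10) (by positivity)
  obtain ⟨r, hr⟩ := exists_nat_ge (2 / ε)
  have hrpos : (0 : ℝ) < r := lt_of_lt_of_le (by positivity) hr
  have hr1 : 1 ≤ r := by exact_mod_cast hrpos
  have hrε : (1 : ℝ) / (2 * r) ≤ ε / 4 := by
    rw [div_le_iff₀ hε] at hr
    rw [div_le_div_iff₀ (by positivity) (by norm_num)]
    linarith
  set K : ℝ := 2 * (r.factorial + 71 * r) with hK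
  have hK0 : 0 < K := by positivity
  obtain ⟨P₀, hP₀⟩ : ∃ P₀ : ℝ, ∀ x : ℝ, P₀ ≤ x →
      800 * C ^ 5 * K < x ^ ε ∧ 16000 * (r + 2 : ℝ) ^ 3 < x ^ ((1 : ℝ) / 6) ∧ 64 ≤ x ∧
        4 * (2 * r + 1 : ℝ) ≤ x := by
    rw [← Filter.eventually_atTop]
    exact ((tendsto_rpow_atTop hε).eventually_gt_atTop _).and
      (((tendsto_rpow_atTop (by norm_num : (0 : ℝ) < 1 / 6)).eventually_gt_atTop _).and
        ((Filter.eventually_ge_atTop _).and (Filter.eventually_ge_atTop _)))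
  refine ⟨|P₀| + 12 * (r + 2) + 2, by positivity, ?_⟩
  intro p hp hp3 a ha c H hH hHp
  have := Fact.mk hp
  have hp1 : (1 : ℝ) ≤ p := by exact_mod_cast hp.one_le
  have hp0 : (0 : ℝ) < p := by linarith
  have hHp' : (H : ℝ) ≤ p := by exact_mod_cast hHp
  have hpe : (p : ℝ) ^ ((1 : ℝ) / 6 + 3 * ε / 4) ≤ (p : ℝ) ^ ((1 : ℝ) / 6 + ε₁) :=
    Real.rpow_le_rpow_of_exponent_le hp1 (by linarith)
  have hge1 : ∀ e : ℝ, 0 ≤ e → 1 ≤ (p : ℝ) ^ e := fun e he => Real.one_le_rpow hp1 he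
  -- for small `p` the hypothesis on `H` is void
  have hpP : P₀ ≤ p := by
    by_contra! hlt
    have h1 := hge1 ((1 : ℝ) / 6 + ε₁) (by positivity)
    have h2 : |P₀| + 12 * (r + 2) + 2 ≤ (|P₀| + 12 * (r + 2) + 2) * (p : ℝ) ^ ((1 : ℝ) / 6 + ε₁) :=
      le_mul_of_one_le_right (by positivity) h1
    have h3 := le_abs_self P₀
    linarith
  obtain ⟨hbig1, hbig2, hbig3, hbig4⟩ := hP₀ p hpP
  have ha0 : (a : ZMod p) ≠ 0 := by
    rw [Ne, ZMod.intCast_zmod_eq_zero_iff_dvd]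
    intro hdvd
    have h1 : IsUnit (p : ℤ) := ha.isUnit_of_dvd' hdvd dvd_rfl
    rw [Int.isUnit_iff] at h1
    omega
  set Q := ⌈(p : ℝ) ^ ((1 : ℝ) / (2 * r))⌉₊ with hQ
  set T := r + Q with hT
  set M := ⌈(p : ℝ) ^ ((1 : ℝ) / 6 + ε / 2)⌉₊ with hM
  set Δ := ⌊C * (p : ℝ) ^ (ε / 10)⌋₊ with hΔ
  have hMge : (p : ℝ) ^ ((1 : ℝ) / 6 + ε / 2) ≤ M := Nat.le_ceil _
  have hMle : (M : ℝ) ≤ 2 * (p : ℝ) ^ ((1 : ℝ) / 6 + ε / 2) := by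
    have h1 := Nat.ceil_lt_add_one (a := (p : ℝ) ^ ((1 : ℝ) / 6 + ε / 2)) (by positivity)
    have h2 := hge1 ((1 : ℝ) / 6 + ε / 2) (by positivity)
    rw [← hM] at h1
    linarith
  have hTle : (T : ℝ) ≤ (r + 2) * (p : ℝ) ^ (ε / 4) := by
    have h1 := Nat.ceil_lt_add_one (a := (p : ℝ) ^ ((1 : ℝ) / (2 * r))) (by positivity)
    have h2 := Real.rpow_le_rpow_of_exponent_le hp1 hrε
    have h3 := hge1 (ε / 4) (by positivity)
    rw [← hQ] at h1
    rw [hT]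
    push_cast
    nlinarith
  have hM1 : 1 ≤ M := Nat.one_le_ceil_iff.2 (by positivity)
  have hT1 : 1 ≤ T := by omega
  have hΔ1 : 1 ≤ Δ := by
    rw [hΔ, Nat.one_le_floor_iff]
    nlinarith [hge1 (ε / 10) (by positivity)]
  have hΔdiv : ∀ n : ℕ, n ≠ 0 → n < p → n.divisors.card ≤ Δ := by
    intro n hn hnp
    refine Nat.le_floor ((hC n hn).trans ?_)
    gcongr
  have hMT : 1000 * M ^ 4 * T ^ 3 < p := by
    have h1 : (1000 : ℝ) * M ^ 4 * T ^ 3 < p := by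
      calc (1000 : ℝ) * M ^ 4 * T ^ 3
          ≤ 1000 * (2 * (p : ℝ) ^ ((1 : ℝ) / 6 + ε / 2)) ^ 4
            * ((r + 2) * (p : ℝ) ^ (ε / 4)) ^ 3 := by gcongr
        _ = 16000 * (r + 2 : ℝ) ^ 3 *
            (((p : ℝ) ^ ((1 : ℝ) / 6 + ε / 2)) ^ 4 * ((p : ℝ) ^ (ε / 4)) ^ 3) := by ring
        _ = 16000 * (r + 2 : ℝ) ^ 3 *
            (p : ℝ) ^ (((1 : ℝ) / 6 + ε / 2) * (4 : ℕ) + (ε / 4) * (3 : ℕ)) := by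
          rw [Real.rpow_add hp0 (_ * _), Real.rpow_mul_natCast hp0.le, Real.rpow_mul_natCast hp0.le]
        _ ≤ 16000 * (r + 2 : ℝ) ^ 3 * (p : ℝ) ^ ((5 : ℝ) / 6) := by
          gcongr
          push_cast; linarith
        _ < (p : ℝ) ^ ((1 : ℝ) / 6) * (p : ℝ) ^ ((5 : ℝ) / 6) := by gcongr
        _ = p := by rw [← Real.rpow_add hp0]; norm_num
    exact_mod_cast h1
  have hMTH : 6 * M * T + 1 ≤ H := by
    have h1 : (6 : ℝ) * M * T + 1 ≤ H := by
      have h2 := hge1 ((1 : ℝ) / 6 + 3 * ε / 4) (by positivity)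
      calc (6 : ℝ) * M * T + 1
          ≤ 6 * (2 * (p : ℝ) ^ ((1 : ℝ) / 6 + ε / 2)) * ((r + 2) * (p : ℝ) ^ (ε / 4)) + 1 := by
            gcongr
        _ = 12 * (r + 2) * (p : ℝ) ^ ((1 : ℝ) / 6 + 3 * ε / 4) + 1 := by
            rw [show (1 : ℝ) / 6 + 3 * ε / 4 = (1 / 6 + ε / 2) + ε / 4 by ring,
              Real.rpow_add hp0 (_ + _)]
            ring
        _ ≤ (|P₀| + 12 * (r + 2) + 2) * (p : ℝ) ^ ((1 : ℝ) / 6 + 3 * ε / 4) := by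
            nlinarith [mul_nonneg (abs_nonneg P₀) (zero_le_one.trans h2)]
        _ ≤ (|P₀| + 12 * (r + 2) + 2) * (p : ℝ) ^ ((1 : ℝ) / 6 + ε₁) := by gcongr
        _ ≤ H := hH
    exact_mod_cast h1
  have hM2 : 2 * M < p := by
    refine lt_of_le_of_lt ?_ hMT
    have h1 : 1 ≤ M ^ 3 * T ^ 3 := Nat.mul_pos (by positivity) (by positivity)
    calc 2 * M = 2 * M * 1 := by ring
      _ ≤ 1000 * M * (M ^ 3 * T ^ 3) := by gcongr; norm_num
      _ = _ := by ring
  have hTp : T < p := by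
    refine lt_of_le_of_lt ?_ hMT
    have h1 : 1 ≤ M ^ 4 * T ^ 2 := Nat.mul_pos (by positivity) (by positivity)
    calc T = 1 * T * 1 := by ring
      _ ≤ 1000 * T * (M ^ 4 * T ^ 2) := by gcongr; norm_num
      _ = _ := by ring
  by_contra hcon
  have hno : ∀ X Y : ℤ, 0 ≤ X → X ≤ (p : ℤ) - 1 → 0 ≤ Y → Y ≤ (p : ℤ) - 1 →
      ¬ 2 ≤ (cubicPoints p a c ∩ box p X Y H).ncard := fun X Y h1 h2 h3 h4 h5 =>
    hcon ⟨X, Y, h1, h2, h3, h4, h5⟩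
  have hlow := card_quotSet_ge hp3 (a : ZMod p) c ha0 M T Δ hM1 hT1 hMT hΔ1 hΔdiv
  have hup := card_le_sqrt _ _ p r r.factorial hp0 (by positivity)
    (sqrt_le_factorial_mul_choose r Q hr1 p hp0.le (Nat.le_ceil _))
    (card_quotSet_le hp3 a c ha0 H M T r hHp hMTH hno hM2 hTp (by exact_mod_cast hbig3)
      (by exact_mod_cast hbig4))
  rw [← hK] at hup
  have hT1' : (1 : ℝ) ≤ T := by exact_mod_cast hT1
  have hlow' : (3 : ℝ) * M ^ 3 * T ^ 2 ≤ 800 * Δ ^ 5 * (quotSet p (a : ZMod p) c M T).card := by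
    exact_mod_cast hlow
  exact rpow_contradiction hp0 (Nat.cast_nonneg Δ) hK0 hMge hT1' (Nat.floor_le (by positivity))
    hup hlow' hbig1
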